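/- arXiv:math/0209257 — 9 statements merged into one kernel-verified Lean document; each statement's English description precedes it below -/
import Mathlib

section
/- Let R be a Noetherian ring and N ⊊ M finitely generated R-modules with Ass(M/N) = {P₁, ..., P_s}. If for each i, Q_i is a P_i-primary component of N in M (i.e., Q_i appears as the P_i-primary component in some irredundant minimal primary decomposition of N in M), then N = Q₁ ∩ Q₂ ∩ ... ∩ Q_s. -/
open Submodule

variable {R M : Type*} [CommRing R] [AddCommGroup M] [Module R M]

/-- The saturation `(N :_M J^∞) = ∪ₙ (N :_M Jⁿ)`. -/
def sat (J : Ideal R) (N : Submodule R M) : Submodule R M :=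
  ⨆ n : ℕ, ⨅ r ∈ (J ^ n : Ideal R), N.comap (LinearMap.lsmul R M r)

/-- `Jⁿ L ⊓ N ≤ J^(n-k) N` for all `n ≥ k`, i.e. the Artin–Rees number is at most `k`. -/
def ARle (J : Ideal R) (N L : Submodule R M) (k : ℕ) : Prop :=
  ∀ n, k ≤ n → (J ^ n • L) ⊓ N ≤ J ^ (n - k) • N

/-- The Artin–Rees number `AR(J, N ⊆ L)`. -/
noncomputable def AR (J : Ideal R) (N L : Submodule R M) : ℕ := sInf {k | ARle J N L k}

/-- `N = ⨅ i, Q i` is an irredundant minimal primary decomposition, with `Q i` being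
`P i`-primary. -/
def IsMinPD (N : Submodule R M) {s : ℕ} (P : Fin s → Ideal R) (Q : Fin s → Submodule R M) :
    Prop :=
  (∀ i, associatedPrimes R (M ⧸ Q i) = {P i}) ∧
  Function.Injective P ∧
  N = ⨅ i, Q i ∧
  ∀ i : Fin s, N ≠ ⨅ j ∈ ({i}ᶜ : Set (Fin s)), Q j

/-- `Q` is a `P`-primary component of `N` in `M`: it occurs as the `P`-primary component of
some irredundant minimal primary decomposition of `N` in `M`. -/
def IsPrimaryComponent (N : Submodule R M) (P : Ideal R) (Q : Submodule R M) : Prop :=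
  ∃ (s : ℕ) (P' : Fin s → Ideal R) (Q' : Fin s → Submodule R M) (i : Fin s),
    IsMinPD N P' Q' ∧ P' i = P ∧ Q' i = Q

/-!
If `Q` is a `P`-primary component of `N`, then `P` is not an associated prime of `Q/N`: writing
`N = Q ∩ Q₂' ∩ ⋯ ∩ Q_t'` embeds `Q/N` into `M/Q₂' ⊕ ⋯ ⊕ M/Q_t'`, and none of these summands has `P`
as an associated prime. With `K = ⋂ Qᵢ`, an associated prime of `K/N` is an associated prime of
`M/N`, hence some `Pᵢ`, and it is also one of `Qᵢ/N`, which is impossible. So `K/N` has no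
associated prime, and over a Noetherian ring this forces `K = N`.

`Ass(K/N)` is expressed below as `(N.submoduleOf K).associatedPrimes`.
-/

theorem comap_colon {A V W : Type*} [Semiring A] [AddCommMonoid V] [Module A V] [AddCommMonoid W]
    [Module A W] (f : V →ₗ[A] W) (N : Submodule A W) (S : Set V) :
    (N.comap f).colon S = N.colon (f '' S) := by
  ext r
  simp only [mem_colon, mem_comap, map_smul, Set.forall_mem_image]

section AssociatedPrimes

variable {A V W : Type*} [CommSemiring A] [AddCommMonoid V] [Module A V] [AddCommMonoid W]
  [Module A W]

theorem associatedPrimes_comap_subset (f : V →ₗ[A] W) (N : Submodule A W) :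
    (N.comap f).associatedPrimes ⊆ N.associatedPrimes := by
  rintro I ⟨hI, x, hx⟩
  exact ⟨hI, f x, by rwa [comap_colon, Set.image_singleton] at hx⟩

theorem associatedPrimes_comap_of_surjective {f : V →ₗ[A] W} (hf : Function.Surjective f)
    (N : Submodule A W) : (N.comap f).associatedPrimes = N.associatedPrimes := by
  refine (associatedPrimes_comap_subset f N).antisymm ?_
  rintro I ⟨hI, y, hy⟩
  obtain ⟨x, rfl⟩ := hf y
  exact ⟨hI, x, by rwa [comap_colon, Set.image_singleton]⟩

theorem associatedPrimes_submoduleOf_subset (N K : Submodule A V) :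
    (N.submoduleOf K).associatedPrimes ⊆ N.associatedPrimes :=
  associatedPrimes_comap_subset K.subtype N

theorem associatedPrimes_submoduleOf_mono (N : Submodule A V) {K L : Submodule A V} (h : K ≤ L) :
    (N.submoduleOf K).associatedPrimes ⊆ (N.submoduleOf L).associatedPrimes :=
  associatedPrimes_comap_subset (inclusion h) (N.submoduleOf L)

theorem associatedPrimes_top : (⊤ : Submodule A V).associatedPrimes = ∅ := by
  refine Set.eq_empty_of_forall_notMem ?_
  rintro I ⟨hI, x, hx⟩
  exact hI.ne_top (by rw [hx, top_colon, Ideal.radical_top])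

theorem associatedPrimes_iInf_subset {ι : Type*} [Finite ι] (Q : ι → Submodule A V) :
    (⨅ i, Q i).associatedPrimes ⊆ ⋃ i, (Q i).associatedPrimes := by
  have := Fintype.ofFinite ι
  rintro I ⟨hI, x, rfl⟩
  have hinf : ((⨅ i, Q i).colon {x}).radical =
      Finset.univ.inf fun i ↦ ((Q i).colon {x}).radical := by
    simp only [← Finset.inf_univ_eq_iInf, colon_finsetInf, ← Ideal.radicalInfTopHom_apply,
      map_finset_inf, Function.comp_def]
  rw [hinf] at hI ⊢
  obtain ⟨i, -, hi⟩ := Ideal.eq_inf_of_isPrime_inf hI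
  exact Set.mem_iUnion.2 ⟨i, hi ▸ hI, x, hi.symm⟩

theorem associatedPrimes_iInf_submoduleOf_subset {ι : Type*} [Finite ι] (Q : ι → Submodule A V)
    (i : ι) :
    ((⨅ j, Q j).submoduleOf (Q i)).associatedPrimes ⊆ ⋃ j ≠ i, (Q j).associatedPrimes := by
  intro p hp
  have hsubmoduleOf : (⨅ j, Q j).submoduleOf (Q i) = ⨅ j, (Q j).submoduleOf (Q i) :=
    comap_iInf _ _
  rw [hsubmoduleOf] at hp
  obtain ⟨j, hj⟩ := Set.mem_iUnion.1 (associatedPrimes_iInf_subset _ hp)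
  refine Set.mem_iUnion₂.2 ⟨j, ?_, associatedPrimes_submoduleOf_subset _ _ hj⟩
  rintro rfl
  rwa [submoduleOf_self, associatedPrimes_top] at hj

end AssociatedPrimes

theorem associatedPrimes_quotient (N : Submodule R M) :
    associatedPrimes R (M ⧸ N) = N.associatedPrimes := by
  have h := associatedPrimes_comap_of_surjective N.mkQ_surjective ⊥
  rw [comap_bot, ker_mkQ] at h
  exact h.symm

theorem associatedPrimes_nonempty_of_ne_top [IsNoetherianRing R] {N : Submodule R M}
    (hN : N ≠ ⊤) : N.associatedPrimes.Nonempty := by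
  have := Quotient.nontrivial_iff.2 hN
  rw [← associatedPrimes_quotient]
  exact associatedPrimes.nonempty R (M ⧸ N)

theorem IsMinPD.notMem_associatedPrimes_submoduleOf {N : Submodule R M} {s : ℕ}
    {P : Fin s → Ideal R} {Q : Fin s → Submodule R M} (h : IsMinPD N P Q) (i : Fin s) :
    P i ∉ (N.submoduleOf (Q i)).associatedPrimes := by
  obtain ⟨hprimary, hinj, rfl, -⟩ := h
  intro hi
  obtain ⟨j, hji, hj⟩ := Set.mem_iUnion₂.1 (associatedPrimes_iInf_submoduleOf_subset Q i hi)
  rw [← associatedPrimes_quotient, hprimary, Set.mem_singleton_iff] at hj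
  exact hji (hinj hj.symm)

theorem IsPrimaryComponent.le {N Q : Submodule R M} {P : Ideal R}
    (h : IsPrimaryComponent N P Q) : N ≤ Q := by
  obtain ⟨s, P', Q', i, ⟨-, -, rfl, -⟩, -, rfl⟩ := h
  exact iInf_le Q' i

theorem IsPrimaryComponent.notMem_associatedPrimes_submoduleOf {N Q : Submodule R M} {P : Ideal R}
    (h : IsPrimaryComponent N P Q) : P ∉ (N.submoduleOf Q).associatedPrimes := by
  obtain ⟨s, P', Q', i, hPD, rfl, rfl⟩ := h
  exact hPD.notMem_associatedPrimes_submoduleOf i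

theorem compatibility_general [IsNoetherianRing R] {N : Submodule R M} {ι : Sort*}
    {P : ι → Ideal R} (hAss : associatedPrimes R (M ⧸ N) ⊆ Set.range P) {Q : ι → Submodule R M}
    (hQ : ∀ i, IsPrimaryComponent N (P i) (Q i)) : N = ⨅ i, Q i := by
  refine le_antisymm (le_iInf fun i ↦ (hQ i).le) ?_
  by_contra hnot_le
  have hne_top : N.submoduleOf (⨅ i, Q i) ≠ ⊤ := mt submoduleOf_eq_top.1 hnot_le
  obtain ⟨p, hp⟩ := associatedPrimes_nonempty_of_ne_top hne_top
  obtain ⟨i, rfl⟩ : p ∈ Set.range P :=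
    hAss (associatedPrimes_quotient N ▸ associatedPrimes_submoduleOf_subset N _ hp)
  exact (hQ i).notMem_associatedPrimes_submoduleOf
    (associatedPrimes_submoduleOf_mono N (iInf_le Q i) hp)

/-- Compatibility (Theorem 1.1): if `Ass(M/N) = {P₁,…,P_s}` and each `Q i` is a
`P i`-primary component of `N` in `M`, then `N = Q₁ ∩ ⋯ ∩ Q_s`. -/
theorem compatibility [IsNoetherianRing R] [Module.Finite R M]
    (N : Submodule R M) (hN : N ≠ ⊤) (s : ℕ) (P : Fin s → Ideal R)
    (hinj : Function.Injective P)
    (hAss : associatedPrimes R (M ⧸ N) = Set.range P)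
    (Q : Fin s → Submodule R M)
    (hQ : ∀ i, IsPrimaryComponent N (P i) (Q i)) :
    N = ⨅ i, Q i :=
  compatibility_general hAss.subset hQ
end

section
/- Let R be a Noetherian ring, N ⊊ M finitely generated R-modules, and I an ideal of R. If N = Q₁ ∩ ... ∩ Q_s is an irredundant minimal primary decomposition with Q_i being P_i-primary, then the intersection of those Q_i for which I is not contained in P_i equals the saturation (N :_M I^∞) = ∪_n (N :_M I^n). In particular, this partial intersection is independent of the chosen primary decomposition. -/
open Submodule

variable {R M : Type*} [CommRing R] [AddCommGroup M] [Module R M]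

/-!
Saturation commutes with finite intersections, so it is enough to saturate one `P`-primary
submodule `Q` at a time. For `x ∉ Q` every minimal prime of the colon ideal `(Q : x)` is associated
to `M ⧸ Q`, so `(Q : x)` has radical `P`. Hence if `I ≤ P`, some power of `I` carries `x` into `Q`,
and the saturation of `Q` is the whole module; otherwise no power does, and `Q` is already
saturated.
-/

section Saturation

variable {I P : Ideal R} {N Q : Submodule R M} {x : M}

theorem mem_sat_iff_exists_pow_le_colon :
    x ∈ sat I N ↔ ∃ n : ℕ, I ^ n ≤ N.colon {x} := by
  have hmono : Monotone fun n : ℕ ↦ ⨅ r ∈ I ^ n, N.comap (LinearMap.lsmul R M r) :=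
    fun _ _ hmn ↦ biInf_mono fun _ hr ↦ Ideal.pow_le_pow_right hmn hr
  simp only [sat, mem_iSup_of_directed _ hmono.directed_le, mem_iInf, mem_comap,
    LinearMap.lsmul_apply, SetLike.le_def, mem_colon_singleton]

theorem le_sat (I : Ideal R) (N : Submodule R M) : N ≤ sat I N := fun _ hx ↦
  mem_sat_iff_exists_pow_le_colon.mpr ⟨0, fun _ _ ↦ mem_colon_singleton.mpr (N.smul_mem _ hx)⟩

theorem le_radical_colon_of_mem_sat (hx : x ∈ sat I N) : I ≤ (N.colon {x}).radical := by
  obtain ⟨n, hn⟩ := mem_sat_iff_exists_pow_le_colon.mp hx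
  exact fun r hr ↦ ⟨n, hn (Ideal.pow_mem_pow hr n)⟩

theorem mem_sat_of_le_radical_colon (hI : I.FG) (h : I ≤ (N.colon {x}).radical) :
    x ∈ sat I N :=
  mem_sat_iff_exists_pow_le_colon.mpr (Ideal.exists_pow_le_of_le_radical_of_fg h hI)

theorem sat_iInf {ι : Sort*} [Finite ι] (I : Ideal R) (N : ι → Submodule R M) :
    sat I (⨅ i, N i) = ⨅ i, sat I (N i) := by
  ext x
  simp only [mem_iInf, mem_sat_iff_exists_pow_le_colon, iInf_colon, le_iInf_iff]
  refine ⟨fun ⟨n, hn⟩ i ↦ ⟨n, hn i⟩, fun h ↦ ?_⟩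
  choose n hn using h
  obtain ⟨m, hm⟩ := (Set.finite_range n).bddAbove
  exact ⟨m, fun i ↦ (Ideal.pow_le_pow_right (hm ⟨i, rfl⟩)).trans (hn i)⟩

theorem sat_eq_top_of_le (hI : I.FG) (hQ : ∀ x ∉ Q, P ≤ (Q.colon {x}).radical)
    (hIP : I ≤ P) : sat I Q = ⊤ := by
  refine eq_top_iff'.mpr fun x ↦ ?_
  by_cases hx : x ∈ Q
  · exact le_sat I Q hx
  · exact mem_sat_of_le_radical_colon hI (hIP.trans (hQ x hx))

theorem sat_eq_self_of_not_le (hQ : ∀ x ∉ Q, (Q.colon {x}).radical ≤ P) (hIP : ¬ I ≤ P) :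
    sat I Q = Q := by
  refine le_antisymm (fun x hx ↦ ?_) (le_sat I Q)
  by_contra hxQ
  exact hIP ((le_radical_colon_of_mem_sat hx).trans (hQ x hxQ))

end Saturation

section AssociatedPrimes

variable {P : Ideal R} {Q : Submodule R M} {x : M}

theorem bot_colon_singleton_mkQ (Q : Submodule R M) (x : M) :
    (⊥ : Submodule R (M ⧸ Q)).colon {Q.mkQ x} = Q.colon {x} := by
  ext r
  rw [mem_colon_singleton, mem_colon_singleton, mem_bot, ← map_smul, mkQ_apply,
    Quotient.mk_eq_zero]

theorem radical_bot_colon_singleton_of_associatedPrimes_eq_singleton [IsNoetherianRing R]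
    (hP : associatedPrimes R M = {P}) (hx : x ≠ 0) :
    ((⊥ : Submodule R M).colon {x}).radical = P := by
  have hne : ((⊥ : Submodule R M).colon {x}).minimalPrimes.Nonempty :=
    Set.nonempty_coe_sort.mp (Ideal.nonempty_minimalPrimes (by simpa))
  have hmin : ∀ p ∈ ((⊥ : Submodule R M).colon {x}).minimalPrimes, p = P := by
    intro p hp
    rw [← Set.mem_singleton_iff, ← hP, AssociatedPrimes.mem_iff, isAssociatedPrime_iff]
    exact ⟨hp.1.1, exists_eq_colon_of_mem_minimalPrimes hp⟩
  rw [← Ideal.sInf_minimalPrimes, Set.eq_singleton_iff_nonempty_unique_mem.mpr ⟨hne, hmin⟩,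
    sInf_singleton]

theorem radical_colon_singleton_of_associatedPrimes_quotient_eq_singleton [IsNoetherianRing R]
    (hQ : associatedPrimes R (M ⧸ Q) = {P}) (hx : x ∉ Q) : (Q.colon {x}).radical = P := by
  rw [← bot_colon_singleton_mkQ]
  exact radical_bot_colon_singleton_of_associatedPrimes_eq_singleton hQ (by simpa)

end AssociatedPrimes

/-- `hQ` is an elementwise form of `Q i` being `P i`-primary, suited to arbitrary commutative rings;
for `Submodule.IsPrimary` it is `Submodule.IsPrimary.radical_colon_singleton_of_notMem`. -/
theorem partial_intersection_eq_saturation_general {ι : Type*} [Finite ι] {P : ι → Ideal R}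
    {Q : ι → Submodule R M} (hQ : ∀ i, ∀ x ∉ Q i, ((Q i).colon {x}).radical = P i) {I : Ideal R}
    (hI : I.FG) : (⨅ i ∈ {i : ι | ¬ I ≤ P i}, Q i) = sat I (⨅ i, Q i) := by
  rw [sat_iInf]
  refine iInf_congr fun i ↦ ?_
  by_cases hi : I ≤ P i
  · simp [hi, sat_eq_top_of_le hI (fun x hx ↦ (hQ i x hx).ge) hi]
  · simp [hi, sat_eq_self_of_not_le (fun x hx ↦ (hQ i x hx).le) hi]

/-- Observation 0.3(1): the intersection of the primary components whose primes do not
contain `I` equals the saturation `(N :_M I^∞)`. -/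
theorem partial_intersection_eq_saturation [IsNoetherianRing R] [Module.Finite R M]
    (N : Submodule R M) (hN : N ≠ ⊤) (s : ℕ) (P : Fin s → Ideal R)
    (Q : Fin s → Submodule R M) (hPD : IsMinPD N P Q) (I : Ideal R) :
    (⨅ i ∈ {i : Fin s | ¬ I ≤ P i}, Q i) = sat I N := by
  obtain ⟨hQ, -, rfl, -⟩ := hPD
  exact partial_intersection_eq_saturation_general
    (fun i _ ↦ radical_colon_singleton_of_associatedPrimes_quotient_eq_singleton (hQ i))
    (IsNoetherian.noetherian I)
end

section
/- Let R be a Noetherian ring, N ⊊ M finitely generated R-modules, and X ⊆ Ass(M/N) an open subset of Ass(M/N) (in the subspace topology from Spec R). Then the primary decompositions of N in M are independent over X: for any two irredundant minimal primary decompositions N = Q₁ ∩ ... ∩ Q_s = Q₁' ∩ ... ∩ Q_s' with Q_i, Q_i' both P_i-primary and X = {P₁, ..., P_r}, one has Q₁ ∩ ... ∩ Q_r = Q₁' ∩ ... ∩ Q_r'. -/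
open Submodule

variable {R M : Type*} [CommRing R] [AddCommGroup M] [Module R M]

/-!
Let `x : M`. If `x` lies in the components over `X`, then at each associated prime `p ∈ X` of
`M ⧸ N` some multiple `a • x` with `a ∉ p` lies in `N`: a component `Q i` with `P i ∉ X` has
`P i ≰ p` because `X` is open, and an element of `P i` outside `p` has a power that pushes `x` into
`Q i`. Conversely, if `a • x ∈ N ≤ Q i` with `a ∉ P i`, then `x ∈ Q i`, as `a` is a nonzerodivisor
on `M ⧸ Q i`. So the intersection of the components over `X` is the kernel of
`M → ∏ p ∈ X, (M ⧸ N)ₚ`, which depends on `N` and `X` only.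
-/

theorem exists_pow_smul_eq_zero_of_forall_mem_associatedPrimes [IsNoetherianRing R] {a : R}
    (ha : ∀ p ∈ associatedPrimes R M, a ∈ p) (x : M) : ∃ n : ℕ, a ^ n • x = 0 := by
  have ha_radical : a ∈ ((⊥ : Submodule R M).colon {x}).radical := by
    rw [← Ideal.sInf_minimalPrimes, Submodule.mem_sInf]
    exact fun p hp ↦ ha p <| isAssociatedPrime_iff.2
      ⟨hp.isPrime, exists_eq_colon_of_mem_minimalPrimes hp⟩
  obtain ⟨n, hn⟩ := ha_radical
  exact ⟨n, by simpa [mem_colon_singleton] using hn⟩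

theorem exists_pow_smul_mem_of_associatedPrimes_quotient_eq [IsNoetherianRing R]
    {Q : Submodule R M} {p : Ideal R} (hQ : associatedPrimes R (M ⧸ Q) = {p}) {a : R} (ha : a ∈ p)
    (x : M) : ∃ n : ℕ, a ^ n • x ∈ Q := by
  obtain ⟨n, hn⟩ :=
    exists_pow_smul_eq_zero_of_forall_mem_associatedPrimes (a := a) (by simpa [hQ]) (Q.mkQ x)
  exact ⟨n, (Quotient.mk_eq_zero Q).1 hn⟩

theorem mem_of_smul_mem_of_associatedPrimes_quotient_eq [IsNoetherianRing R]
    {Q : Submodule R M} {p : Ideal R} (hQ : associatedPrimes R (M ⧸ Q) = {p}) {a : R} (ha : a ∉ p)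
    {x : M} (hx : a • x ∈ Q) : x ∈ Q := by
  have ha_regular : IsSMulRegular (M ⧸ Q) a := by
    have := biUnion_associatedPrimes_eq_compl_regular R (M := M ⧸ Q)
    simpa [hQ, ha] using Set.ext_iff.1 this a
  exact mem_of_isSMulRegular_quotient_of_smul_mem ha_regular hx

theorem associatedPrimes_quotient_comap_subtype_subset (N L : Submodule R M) :
    associatedPrimes R (L ⧸ N.comap L.subtype) ⊆ associatedPrimes R (M ⧸ N) := by
  refine associatedPrimes.subset_of_injective (f := mapQ _ N L.subtype le_rfl) ?_
  rw [← LinearMap.ker_eq_bot, ker_mapQ, mkQ_map_self]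

theorem mem_associatedPrimes_quotient_inf [IsNoetherianRing R] {L Q : Submodule R M} {p : Ideal R}
    (hQ : associatedPrimes R (M ⧸ Q) = {p}) (hLQ : ¬ L ≤ Q) :
    p ∈ associatedPrimes R (M ⧸ L ⊓ Q) := by
  have h_eq : (L ⊓ Q).comap L.subtype = Q.comap L.subtype := by simp
  have : Nontrivial (L ⧸ Q.comap L.subtype) := by
    rwa [Quotient.nontrivial_iff, Ne, comap_subtype_eq_top]
  obtain ⟨q, hq⟩ := associatedPrimes.nonempty R (L ⧸ Q.comap L.subtype)
  obtain rfl : q = p := by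
    simpa [hQ] using associatedPrimes_quotient_comap_subtype_subset Q L hq
  exact associatedPrimes_quotient_comap_subtype_subset _ L (h_eq ▸ hq)

theorem exists_mem_smul_mem_iInf {ι : Type*} [Finite ι] (S : Submonoid R)
    {Q : ι → Submodule R M} {x : M} (h : ∀ i, ∃ a ∈ S, a • x ∈ Q i) :
    ∃ a ∈ S, a • x ∈ ⨅ i, Q i := by
  cases nonempty_fintype ι
  choose a ha hax using h
  refine ⟨∏ i, a i, S.prod_mem fun i _ ↦ ha i, (mem_iInf Q).2 fun i ↦ ?_⟩
  obtain ⟨b, hb⟩ := Finset.dvd_prod_of_mem a (Finset.mem_univ i)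
  rw [hb, mul_comm, mul_smul]
  exact (Q i).smul_mem b (hax i)

namespace IsMinPD

variable {N : Submodule R M} {s : ℕ} {P : Fin s → Ideal R} {Q : Fin s → Submodule R M}

theorem le_component (h : IsMinPD N P Q) (i : Fin s) : N ≤ Q i :=
  h.2.2.1.trans_le (iInf_le Q i)

theorem mem_associatedPrimes [IsNoetherianRing R] (h : IsMinPD N P Q) (i : Fin s) :
    P i ∈ associatedPrimes R (M ⧸ N) := by
  obtain ⟨hQ, -, hN, h_irredundant⟩ := h
  set L : Submodule R M := ⨅ j ∈ ({i}ᶜ : Set (Fin s)), Q j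
  have h_inf : N = L ⊓ Q i := by
    rw [hN, inf_comm]
    exact iInf_split_single Q i
  have hL : ¬ L ≤ Q i := fun hle ↦ h_irredundant i (h_inf.trans (inf_eq_left.2 hle))
  exact h_inf ▸ mem_associatedPrimes_quotient_inf (hQ i) hL

theorem mem_iInf_components_iff [IsNoetherianRing R] (h : IsMinPD N P Q) {X : Set (Ideal R)}
    (hopen : ∀ p ∈ X, ∀ q ∈ associatedPrimes R (M ⧸ N), q ≤ p → q ∈ X) {x : M} :
    x ∈ ⨅ i ∈ {i : Fin s | P i ∈ X}, Q i ↔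
      ∀ p ∈ associatedPrimes R (M ⧸ N), p ∈ X → ∃ a ∉ p, a • x ∈ N := by
  simp only [mem_iInf, Set.mem_ofPred_eq]
  refine ⟨fun hx p hp hpX ↦ ?_, fun hx i hi ↦ ?_⟩
  · have : p.IsPrime := hp.isPrime
    have h_component : ∀ i, ∃ a ∈ p.primeCompl, a • x ∈ Q i := by
      intro i
      by_cases hi : P i ∈ X
      · exact ⟨1, one_mem _, by simpa using hx i hi⟩
      · have h_not_le : ¬ P i ≤ p := fun hle ↦ hi (hopen p hpX _ (h.mem_associatedPrimes i) hle)
        obtain ⟨a, haP, hap⟩ := SetLike.not_le_iff_exists.1 h_not_le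
        obtain ⟨n, hn⟩ := exists_pow_smul_mem_of_associatedPrimes_quotient_eq (h.1 i) haP x
        exact ⟨a ^ n, pow_mem (show a ∈ p.primeCompl from hap) n, hn⟩
    rw [h.2.2.1]
    exact exists_mem_smul_mem_iInf p.primeCompl h_component
  · obtain ⟨a, ha, hax⟩ := hx (P i) (h.mem_associatedPrimes i) hi
    exact mem_of_smul_mem_of_associatedPrimes_quotient_eq (h.1 i) ha (h.le_component i hax)

end IsMinPD

theorem open_imp_indep_general [IsNoetherianRing R] (N : Submodule R M) (X : Set (Ideal R))
    (hopen : ∀ p ∈ X, ∀ q ∈ associatedPrimes R (M ⧸ N), q ≤ p → q ∈ X)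
    {s s' : ℕ} (P : Fin s → Ideal R) (P' : Fin s' → Ideal R)
    (Q : Fin s → Submodule R M) (Q' : Fin s' → Submodule R M)
    (hPD : IsMinPD N P Q) (hPD' : IsMinPD N P' Q') :
    (⨅ i ∈ {i : Fin s | P i ∈ X}, Q i) = ⨅ i ∈ {i : Fin s' | P' i ∈ X}, Q' i := by
  ext x
  rw [hPD.mem_iInf_components_iff hopen, hPD'.mem_iInf_components_iff hopen]

/-- Theorem 2.2, "if" direction: if `X ⊆ Ass(M/N)` is stable under specialization within
`Ass(M/N)` (i.e. open), then the primary decompositions of `N` in `M` are independent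
over `X`. -/
theorem open_imp_indep [IsNoetherianRing R] [Module.Finite R M]
    (N : Submodule R M) (hN : N ≠ ⊤) (X : Set (Ideal R))
    (hX : X ⊆ associatedPrimes R (M ⧸ N))
    (hopen : ∀ P ∈ X, ∀ P' ∈ associatedPrimes R (M ⧸ N), P' ≤ P → P' ∈ X)
    (s : ℕ) (P : Fin s → Ideal R) (Q Q' : Fin s → Submodule R M)
    (hPD : IsMinPD N P Q) (hPD' : IsMinPD N P Q') :
    (⨅ i ∈ {i : Fin s | P i ∈ X}, Q i) = ⨅ i ∈ {i : Fin s | P i ∈ X}, Q' i :=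
  open_imp_indep_general N X hopen P P Q Q' hPD hPD'
end

section
/- Let R be a Noetherian ring, M a finitely generated R-module, N ⊊ M a submodule, and P ∈ Ass(M/N). Then for all sufficiently large n, the submodule ker(M → (M/(P^n M + N))_P) is a P-primary component of N in M; in particular, for n large the submodule Q_n := ker(M → (M/(P^n M + N))_P) is P-primary and contains N, and N equals the intersection over all P ∈ Ass(M/N) of such Q_n's. -/
open Submodule

variable {R M : Type*} [CommRing R] [AddCommGroup M] [Module R M]

/-- The kernel of `M → (M/L)_P`, for `P` a prime ideal. -/
noncomputable def locKer (P : Ideal R) (hP : P.IsPrime) (L : Submodule R M) :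
    Submodule R M :=
  letI := hP
  LinearMap.ker ((LocalizedModule.mkLinearMap P.primeCompl (M ⧸ L)).comp L.mkQ)

/-!
In a minimal primary decomposition `N = ⨅ Q_P`, indexed by `P ∈ Ass(M/N)`, each `P` is the radical
of the annihilator of `M/Q_P`, so `PⁿM ≤ Q_P` for `n ≫ 0`, because `R/Ann(M/Q_P)` is Noetherian.
Then `K_P = ker (M → (M/(PⁿM + N))_P)` is squeezed between `N` and `ker (M → (M/Q_P)_P) = Q_P`,
which forces `N = ⨅ K_P` and `K_P ≠ M`. After localizing at `P`, elements outside `P` act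
injectively on `M/K_P` while those in `P` act nilpotently, so `K_P` is `P`-primary. Finally, no
`K_P` can be omitted, since `P ∈ Ass(M/N)` is not an associated prime of an intersection of primary
submodules belonging to other primes.
-/

theorem isNoetherianRing_quotient_annihilator [IsNoetherian R M] :
    IsNoetherianRing (R ⧸ Module.annihilator R M) := by
  have hker : Module.annihilator R M = LinearMap.ker (LinearMap.lsmul R M) := by
    ext r
    simp [Module.mem_annihilator, LinearMap.ext_iff]
  have hinj : Function.Injective ((Module.annihilator R M).liftQ (LinearMap.lsmul R M) hker.le) :=
    LinearMap.ker_eq_bot.1 (ker_liftQ_eq_bot' _ _ hker)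
  have : IsNoetherian R (R ⧸ Module.annihilator R M) := isNoetherian_of_injective _ hinj
  exact isNoetherian_of_tower R this

theorem exists_radical_colon_univ_pow_le [IsNoetherian R M] (Q : Submodule R M) :
    ∃ n : ℕ, (Q.colon Set.univ).radical ^ n ≤ Q.colon Set.univ := by
  have : IsNoetherianRing (R ⧸ Q.colon Set.univ) :=
    annihilator_quotient (N := Q) ▸ isNoetherianRing_quotient_annihilator
  obtain ⟨n, hn⟩ := IsNoetherianRing.isNilpotent_nilradical (R ⧸ Q.colon Set.univ)
  refine ⟨n, ?_⟩
  rw [← Ideal.mk_ker (I := Q.colon Set.univ), ← Ideal.map_eq_bot_iff_le_ker, Ideal.map_pow,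
    Ideal.map_radical_of_surjective Ideal.Quotient.mk_surjective (by simp), Ideal.mk_ker,
    Ideal.map_quotient_self]
  exact hn

theorem eventually_radical_pow_smul_top_le [IsNoetherian R M] (Q : Submodule R M) :
    ∀ᶠ n : ℕ in Filter.atTop, (Q.colon Set.univ).radical ^ n • (⊤ : Submodule R M) ≤ Q := by
  obtain ⟨k, hk⟩ := exists_radical_colon_univ_pow_le Q
  filter_upwards [Filter.eventually_ge_atTop k] with n hn
  exact smul_le.2 fun r hr x _ => mem_colon.1 (hk (Ideal.pow_le_pow_right hn hr)) x trivial

theorem le_radical_colon_univ_of_pow_smul_top_le {I : Ideal R} {L : Submodule R M} {n : ℕ}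
    (h : I ^ n • (⊤ : Submodule R M) ≤ L) : I ≤ (L.colon Set.univ).radical :=
  fun _ hr => ⟨n, mem_colon.2 fun _ _ => h (smul_mem_smul (Ideal.pow_mem_pow hr n) mem_top)⟩

theorem associatedPrimes_quotient_of_isPrimary {Q : Submodule R M} (hQ : Q.IsPrimary) :
    associatedPrimes R (M ⧸ Q) = {(Q.colon Set.univ).radical} := by
  have hdecomp : Q.IsMinimalPrimaryDecomposition {Q} :=
    ⟨by simp, by simpa using hQ, by simp, by simpa using hQ.ne_top⟩
  rw [associatedPrimes_quotient, ← hdecomp.image_radical_eq_associated_primes]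
  simp

theorem associatedPrimes_quotient_biInf_subset {ι : Type*} {s : Set ι} (hs : s.Finite)
    (Q : ι → Submodule R M) :
    associatedPrimes R (M ⧸ ⨅ i ∈ s, Q i) ⊆ ⋃ i ∈ s, associatedPrimes R (M ⧸ Q i) := by
  lift s to Finset ι using hs
  simp only [associatedPrimes_quotient, Finset.mem_coe, ← Finset.inf_eq_iInf]
  rintro P ⟨hP, x, hx⟩
  have hinf : P = s.inf fun i => ((Q i).colon {x}).radical := by
    rw [hx, colon_finsetInf, ← Ideal.radicalInfTopHom_apply, map_finset_inf]
    rfl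
  obtain ⟨i, hi, hPi⟩ := Ideal.eq_inf_of_isPrime_inf (hinf ▸ hP)
  exact Set.mem_biUnion hi ⟨hP, x, hinf.trans hPi.symm⟩

theorem finite_associatedPrimes_quotient_of_isLasker (h : IsLasker R M) (N : Submodule R M) :
    (associatedPrimes R (M ⧸ N)).Finite := by
  obtain ⟨t, ht⟩ := h.exists_isMinimalPrimaryDecomposition N
  rw [associatedPrimes_quotient, ← ht.image_radical_eq_associated_primes]
  exact t.finite_toSet.image _

theorem exists_isPrimary_family_of_isLasker (h : IsLasker R M) (N : Submodule R M) :
    ∃ Q : associatedPrimes R (M ⧸ N) → Submodule R M,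
      (∀ P, (Q P).IsPrimary ∧ ((Q P).colon Set.univ).radical = P) ∧ ⨅ P, Q P = N := by
  obtain ⟨t, ht⟩ := h.exists_isMinimalPrimaryDecomposition N
  have himage := ht.image_radical_eq_associated_primes.trans (associatedPrimes_quotient N).symm
  have hmem (P : associatedPrimes R (M ⧸ N)) : ∃ q ∈ t, (q.colon Set.univ).radical = P :=
    himage.ge P.2
  choose Q hQt hQrad using hmem
  refine ⟨Q, fun P => ⟨ht.primary (hQt P), hQrad P⟩, le_antisymm ?_ (le_iInf fun P => ?_)⟩
  · refine (Finset.le_inf fun q hq => ?_).trans_eq ht.inf_eq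
    have hradq : (q.colon Set.univ).radical ∈ associatedPrimes R (M ⧸ N) :=
      himage.le (Set.mem_image_of_mem _ hq)
    exact (iInf_le Q ⟨_, hradq⟩).trans_eq (ht.injOn _ _ (hQt _) hq (hQrad _))
  · exact ht.inf_eq.ge.trans (Finset.inf_le (hQt P))

theorem isPrimaryComponent_of_eq_iInf {N : Submodule R M} [Finite (associatedPrimes R (M ⧸ N))]
    {Q : associatedPrimes R (M ⧸ N) → Submodule R M}
    (hQ : ∀ P, associatedPrimes R (M ⧸ Q P) = {P.1}) (hN : N = ⨅ P, Q P)
    (P : associatedPrimes R (M ⧸ N)) : IsPrimaryComponent N P (Q P) := by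
  obtain ⟨s, ⟨e⟩⟩ := Finite.exists_equiv_fin (associatedPrimes R (M ⧸ N))
  have hinj : Function.Injective fun i => (e.symm i).1 :=
    Subtype.val_injective.comp e.symm.injective
  refine ⟨s, fun i => (e.symm i).1, fun i => Q (e.symm i), e P,
    ⟨fun i => hQ _, hinj, hN.trans (e.symm.iInf_comp (g := Q)).symm, fun i hi => ?_⟩,
    by simp, by simp⟩
  have hsub := associatedPrimes_quotient_biInf_subset (Set.toFinite {i}ᶜ) fun j => Q (e.symm j)
  rw [← hi] at hsub
  obtain ⟨j, hji, hPij⟩ := Set.mem_iUnion₂.1 (hsub (e.symm i).2)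
  rw [hQ, Set.mem_singleton_iff] at hPij
  exact hji (hinj hPij.symm)

section LocKer

variable {P : Ideal R} {hP : P.IsPrime} {L L' : Submodule R M}

theorem mem_locKer {x : M} : x ∈ locKer P hP L ↔ ∃ s ∉ P, s • x ∈ L := by
  rw [locKer, LinearMap.mem_ker, LinearMap.comp_apply, ← LinearMap.mem_ker,
    LocalizedModule.mem_ker_mkLinearMap_iff]
  simp only [Ideal.mem_primeCompl_iff, mkQ_apply, ← Quotient.mk_smul, Quotient.mk_eq_zero]

theorem le_locKer : L ≤ locKer P hP L :=
  fun x hx => mem_locKer.2 ⟨1, hP.one_notMem, by rwa [one_smul]⟩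

theorem locKer_mono (h : L ≤ L') : locKer P hP L ≤ locKer P hP L' := by
  intro x hx
  obtain ⟨s, hs, hsx⟩ := mem_locKer.1 hx
  exact mem_locKer.2 ⟨s, hs, h hsx⟩

theorem mem_locKer_of_smul_mem {s : R} {x : M} (hs : s ∉ P) (h : s • x ∈ locKer P hP L) :
    x ∈ locKer P hP L := by
  obtain ⟨t, ht, htx⟩ := mem_locKer.1 h
  exact mem_locKer.2 ⟨t * s, hP.mul_notMem ht hs, by rwa [mul_smul]⟩

theorem locKer_le_of_isPrimary (hL : L.IsPrimary) (hLP : (L.colon Set.univ).radical ≤ P) :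
    locKer P hP L ≤ L := by
  intro x hx
  obtain ⟨s, hs, hsx⟩ := mem_locKer.1 hx
  exact (hL.mem_or_mem hsx).resolve_right fun hsL => hs (hLP hsL)

theorem radical_colon_univ_locKer (hPL : P ≤ (L.colon Set.univ).radical)
    (htop : locKer P hP L ≠ ⊤) : ((locKer P hP L).colon Set.univ).radical = P := by
  refine le_antisymm (hP.radical_le_iff.2 fun r hr => ?_)
    (hPL.trans (Ideal.radical_mono (colon_mono le_locKer le_rfl)))
  by_contra hrP
  exact htop (eq_top_iff'.2 fun x => mem_locKer_of_smul_mem hrP (mem_colon.1 hr x trivial))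

theorem isPrimary_locKer (hPL : P ≤ (L.colon Set.univ).radical) (htop : locKer P hP L ≠ ⊤) :
    (locKer P hP L).IsPrimary := by
  refine ⟨htop, fun {r x} hrx => ?_⟩
  by_cases hr : r ∈ P
  · exact .inr ((radical_colon_univ_locKer hPL htop).ge hr)
  · exact .inl (mem_locKer_of_smul_mem hr hrx)

theorem associatedPrimes_quotient_locKer (hPL : P ≤ (L.colon Set.univ).radical)
    (htop : locKer P hP L ≠ ⊤) : associatedPrimes R (M ⧸ locKer P hP L) = {P} := by
  rw [associatedPrimes_quotient_of_isPrimary (isPrimary_locKer hPL htop),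
    radical_colon_univ_locKer hPL htop]

end LocKer

theorem locKer_isPrimaryComponent_general [IsNoetherian R M] (N : Submodule R M) :
    ∃ n₀ : ℕ, ∀ n ≥ n₀,
      (∀ (P : Ideal R) (hP : P ∈ associatedPrimes R (M ⧸ N)),
        IsPrimaryComponent N P
          (locKer P (IsAssociatedPrime.isPrime hP) ((P ^ n • ⊤ : Submodule R M) ⊔ N))) ∧
      N = ⨅ (P : Ideal R), ⨅ (hP : P ∈ associatedPrimes R (M ⧸ N)),
            locKer P (IsAssociatedPrime.isPrime hP) ((P ^ n • ⊤ : Submodule R M) ⊔ N) := by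
  have : Finite (associatedPrimes R (M ⧸ N)) :=
    finite_associatedPrimes_quotient_of_isLasker (isLasker R M) N
  obtain ⟨Q, hQ, hQinf⟩ := exists_isPrimary_family_of_isLasker (isLasker R M) N
  have hpow : ∀ᶠ n : ℕ in Filter.atTop, ∀ P : associatedPrimes R (M ⧸ N),
      (P.1 ^ n • ⊤ : Submodule R M) ≤ Q P := by
    refine Filter.eventually_all.2 fun P => ?_
    simpa only [(hQ P).2] using eventually_radical_pow_smul_top_le (Q P)
  obtain ⟨n₀, hn₀⟩ := Filter.eventually_atTop.1 hpow
  refine ⟨n₀, fun n hn => ?_⟩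
  let K (P : associatedPrimes R (M ⧸ N)) : Submodule R M :=
    locKer P.1 (IsAssociatedPrime.isPrime P.2) ((P.1 ^ n • ⊤ : Submodule R M) ⊔ N)
  have hKQ (P) : K P ≤ Q P :=
    (locKer_mono (sup_le (hn₀ n hn P) (hQinf.ge.trans (iInf_le Q P)))).trans
      (locKer_le_of_isPrimary (hQ P).1 (hQ P).2.le)
  have hKass (P) : associatedPrimes R (M ⧸ K P) = {P.1} :=
    associatedPrimes_quotient_locKer (le_radical_colon_univ_of_pow_smul_top_le le_sup_left)
      (ne_top_of_le_ne_top (hQ P).1.ne_top (hKQ P))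
  have hKinf : N = ⨅ P, K P :=
    le_antisymm (le_iInf fun _ => le_sup_right.trans le_locKer) ((iInf_mono hKQ).trans_eq hQinf)
  exact ⟨fun P hP => isPrimaryComponent_of_eq_iInf hKass hKinf ⟨P, hP⟩,
    hKinf.trans iInf_subtype⟩

/-- For `n ≫ 0`, `ker (M → (M/(PⁿM + N))_P)` is a `P`-primary component of `N` in `M`,
and `N` is the intersection of these over all `P ∈ Ass(M/N)`. -/
theorem locKer_isPrimaryComponent [IsNoetherianRing R] [Module.Finite R M]
    (N : Submodule R M) (hN : N ≠ ⊤) :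
    ∃ n₀ : ℕ, ∀ n ≥ n₀,
      (∀ (P : Ideal R) (hP : P ∈ associatedPrimes R (M ⧸ N)),
        IsPrimaryComponent N P
          (locKer P (IsAssociatedPrime.isPrime hP) ((P ^ n • ⊤ : Submodule R M) ⊔ N))) ∧
      N = ⨅ (P : Ideal R), ⨅ (hP : P ∈ associatedPrimes R (M ⧸ N)),
            locKer P (IsAssociatedPrime.isPrime hP) ((P ^ n • ⊤ : Submodule R M) ⊔ N) :=
  locKer_isPrimaryComponent_general N
end

section
/- Let R be a Noetherian ring, M a finitely generated R-module, J an ideal, and x₁, ..., x_t ∈ R elements regular on M such that AR(J, x_i M ⊆ M) ≤ k for each i. Then for any n₁, ..., n_t ∈ ℕ, AR(J, x₁^{n₁} ⋯ x_t^{n_t} M ⊆ M) ≤ k(n₁ + ⋯ + n_t). -/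
open Submodule

variable {R M : Type*} [CommRing R] [AddCommGroup M] [Module R M]

/-!
Bounds on Artin–Rees numbers add up along a chain `P ⊆ N ⊆ L`, and they are preserved by injective
linear maps. If `x` is regular on `M`, then multiplication by `x` identifies `yM ⊆ M` with
`xyM ⊆ xM`, so the chain `xyM ⊆ xM ⊆ M` bounds the Artin–Rees number of a product by the sum of the
bounds for its factors. By the Artin–Rees lemma the set whose infimum defines `AR` is nonempty, so
that `AR` is a genuine minimum and not the junk value `sInf ∅ = 0`.
-/

section ARle

variable {J : Ideal R} {N L P : Submodule R M} {a b : ℕ}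

theorem ARle.refl (J : Ideal R) (N : Submodule R M) : ARle J N N 0 :=
  fun _ _ => inf_le_left

theorem ARle.mono (h : ARle J N L a) (hab : a ≤ b) : ARle J N L b := fun n hn =>
  (h n (hab.trans hn)).trans
    (smul_mono_left (Ideal.pow_le_pow_right (Nat.sub_le_sub_left hab n)))

theorem ARle.trans (hNL : ARle J N L a) (hPN : ARle J P N b) (hle : P ≤ N) :
    ARle J P L (a + b) := fun n hn =>
  calc J ^ n • L ⊓ P
    _ ≤ J ^ (n - a) • N ⊓ P :=
      le_inf ((inf_le_inf_left _ hle).trans (hNL n (by lia))) inf_le_right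
    _ ≤ J ^ (n - a - b) • P := hPN (n - a) (by lia)
    _ = J ^ (n - (a + b)) • P := by rw [Nat.sub_sub]

theorem ARle.map {M' : Type*} [AddCommGroup M'] [Module R M'] (h : ARle J N L a)
    {f : M →ₗ[R] M'} (hf : Function.Injective f) : ARle J (N.map f) (L.map f) a := fun n hn =>
  calc J ^ n • L.map f ⊓ N.map f
    _ = (J ^ n • L ⊓ N).map f := by rw [map_inf f hf, map_smul'']
    _ ≤ (J ^ (n - a) • N).map f := map_mono (h n hn)
    _ = J ^ (n - a) • N.map f := map_smul'' _ _ f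

theorem exists_ARle [IsNoetherianRing R] [Module.Finite R M] (J : Ideal R)
    (N L : Submodule R M) : ∃ k, ARle J N L k := by
  have stable : (J.stableFiltration L ⊓ J.trivialFiltration N).Stable :=
    (J.stableFiltration_stable L).inter_right (J.trivialFiltration N)
  obtain ⟨k, hk⟩ := stable.exists_pow_smul_eq_of_ge
  refine ⟨k, fun n hn => ?_⟩
  calc J ^ n • L ⊓ N
    _ = J ^ (n - k) • (J ^ k • L ⊓ N) := hk n hn
    _ ≤ J ^ (n - k) • N := smul_mono_right _ inf_le_right

theorem AR_le_iff [IsNoetherianRing R] [Module.Finite R M] : AR J N L ≤ a ↔ ARle J N L a :=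
  have attained : ARle J N L (AR J N L) := Nat.sInf_mem (exists_ARle J N L)
  ⟨attained.mono, fun h => Nat.sInf_le h⟩

end ARle

section Principal

variable {J : Ideal R}

theorem range_lsmul_mul (x y : R) :
    LinearMap.range (LinearMap.lsmul R M (x * y)) =
      (LinearMap.range (LinearMap.lsmul R M y)).map (LinearMap.lsmul R M x) := by
  rw [← LinearMap.range_comp]
  exact congrArg LinearMap.range (LinearMap.ext (mul_smul x y))

theorem ARle_range_lsmul_one (J : Ideal R) :
    ARle J (LinearMap.range (LinearMap.lsmul R M 1)) ⊤ 0 := by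
  rw [show LinearMap.lsmul R M 1 = LinearMap.id from LinearMap.ext (one_smul R),
    LinearMap.range_id]
  exact ARle.refl J ⊤

theorem ARle_range_lsmul_mul {x y : R} {a b : ℕ} (hx : IsSMulRegular M x)
    (ha : ARle J (LinearMap.range (LinearMap.lsmul R M x)) ⊤ a)
    (hb : ARle J (LinearMap.range (LinearMap.lsmul R M y)) ⊤ b) :
    ARle J (LinearMap.range (LinearMap.lsmul R M (x * y))) ⊤ (a + b) := by
  have hb' : ARle J (LinearMap.range (LinearMap.lsmul R M (x * y)))
      (LinearMap.range (LinearMap.lsmul R M x)) b := by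
    rw [range_lsmul_mul, LinearMap.range_eq_map (LinearMap.lsmul R M x)]
    exact hb.map hx
  have hle : LinearMap.range (LinearMap.lsmul R M (x * y)) ≤
      LinearMap.range (LinearMap.lsmul R M x) :=
    (range_lsmul_mul x y).trans_le LinearMap.map_le_range
  exact ha.trans hb' hle

theorem ARle_range_lsmul_pow {x : R} {k : ℕ} (hx : IsSMulRegular M x)
    (hk : ARle J (LinearMap.range (LinearMap.lsmul R M x)) ⊤ k) (n : ℕ) :
    ARle J (LinearMap.range (LinearMap.lsmul R M (x ^ n))) ⊤ (k * n) := by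
  induction n with
  | zero => simpa only [pow_zero, mul_zero] using ARle_range_lsmul_one J
  | succ n ih =>
    rw [pow_succ', mul_add_one, add_comm]
    exact ARle_range_lsmul_mul hx hk ih

theorem AR_prod_pow_le_general {ι : Type*} (J : Ideal R) (s : Finset ι) (x : ι → R) (k : ι → ℕ)
    (hx : ∀ i ∈ s, IsSMulRegular M (x i))
    (hk : ∀ i ∈ s, ARle J (LinearMap.range (LinearMap.lsmul R M (x i))) ⊤ (k i)) (n : ι → ℕ) :
    ARle J (LinearMap.range (LinearMap.lsmul R M (∏ i ∈ s, x i ^ n i))) ⊤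
      (∑ i ∈ s, k i * n i) := by
  induction s using Finset.cons_induction with
  | empty => exact ARle_range_lsmul_one J
  | cons i s hi ih =>
    rw [Finset.prod_cons, Finset.sum_cons]
    rw [Finset.forall_mem_cons] at hx hk
    exact ARle_range_lsmul_mul (hx.1.pow (n i)) (ARle_range_lsmul_pow hx.1 hk.1 (n i))
      (ih hx.2 hk.2)

end Principal

/-- If `AR(J, xᵢM ⊆ M) ≤ k` for `M`-regular elements `x₁, …, x_t`, then
`AR(J, x₁^{n₁}⋯x_t^{n_t}M ⊆ M) ≤ k(n₁ + ⋯ + n_t)`. -/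
theorem AR_prod_pow_le [IsNoetherianRing R] [Module.Finite R M]
    (J : Ideal R) (t : ℕ) (x : Fin t → R)
    (hx : ∀ i, Function.Injective fun m : M => x i • m) (k : ℕ)
    (hAR : ∀ i, AR J (LinearMap.range (LinearMap.lsmul R M (x i))) ⊤ ≤ k)
    (n : Fin t → ℕ) :
    AR J (LinearMap.range (LinearMap.lsmul R M (∏ i, x i ^ n i))) ⊤ ≤ k * ∑ i, n i := by
  rw [AR_le_iff, Finset.mul_sum]
  exact AR_prod_pow_le_general J _ x _ (fun i _ => hx i) (fun i _ => AR_le_iff.mp (hAR i)) n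
end

section
/- Let R be a Noetherian ring, M a finitely generated R-module, and I₁, ..., I_t ideals of R. Then there exists k ∈ ℕ such that for all n₁, ..., n_t ∈ ℕ and all ideals J ⊆ R: J^{k(n₁+⋯+n_t)} M ∩ (I₁^{n₁}⋯I_t^{n_t} M :_M J^∞) ⊆ I₁^{n₁}⋯I_t^{n_t} M. -/
open Submodule

variable {R M : Type*} [CommRing R] [AddCommGroup M] [Module R M]

/-!
Suppose first that `M = R`. In the extended multi-Rees algebra `S = ⨁ I₁^{d₁}⋯I_t^{d_t} t^d` the
elements `t_i⁻¹` are nonzerodivisors, and `t^{-n} S` contracts to `I₁^{n₁}⋯I_t^{n_t}`. Since `S` is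
Noetherian, it suffices to bound, uniformly in `J`, the powers of `J` needed for products of
elements of a finite set `X` of nonzerodivisors.

A nonzero element of `(J^n ⊓ sat J K) / K` has a multiple whose annihilator is an associated prime
`P ⊇ J` of `K`, so only `J = P` matters. The associated primes of a product of elements of `X` are
associated primes of the factors, hence lie in a finite set. For one such prime and one `x ∈ X`, the
Artin–Rees lemma gives `P^{c+k} ⊓ sat P (x) ⊆ P^c x`; cancelling one factor at a time
costs `k` powers of `P` per factor.

A general `M` is reduced to the ring case by idealization: `M` is an ideal of `R ⋉ M`, and `K M` is
the contraction to `M` of the extension of the ideal `K` to `R ⋉ M`.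
-/

section Saturation

open Filter (atTop eventually_atTop)
open scoped Pointwise

lemma mem_sat_iff {J : Ideal R} {K : Submodule R M} {m : M} :
    m ∈ sat J K ↔ ∃ e, J ^ e ≤ K.colon {m} := by
  have antitone_pow : Monotone fun e : ℕ ↦
      ⨅ r ∈ (J ^ e : Ideal R), K.comap (LinearMap.lsmul R M r) :=
    fun _ _ h ↦ biInf_mono fun _ hr ↦ Ideal.pow_le_pow_right h hr
  rw [sat, mem_iSup_of_directed _ antitone_pow.directed_le]
  simp only [mem_iInf, mem_comap, LinearMap.lsmul_apply, SetLike.le_def, mem_colon_singleton]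

lemma mem_sat_of_smul_mem_sat_smul {J : Ideal R} {K : Submodule R M} {x : R}
    (hx : IsSMulRegular M x) {m : M} (hm : x • m ∈ sat J (x • K)) : m ∈ sat J K := by
  obtain ⟨e, he⟩ := mem_sat_iff.1 hm
  refine mem_sat_iff.2 ⟨e, fun r hr ↦ mem_colon_singleton.2 ?_⟩
  obtain ⟨v, hvK, hv⟩ :=
    (mem_smul_pointwise_iff_exists _ _ _).1 (mem_colon_singleton.1 (he hr))
  rw [smul_comm r x] at hv
  exact hx hv ▸ hvK

lemma exists_pow_le_colon_sat [IsNoetherian R M] (J : Ideal R) (K : Submodule R M) :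
    ∃ e, J ^ e ≤ K.colon (sat J K : Set M) := by
  obtain ⟨t, ht⟩ := IsNoetherian.noetherian (sat J K)
  have eventually_le : ∀ m ∈ t, ∀ᶠ e in atTop, J ^ e ≤ K.colon {m} := fun m hm ↦ by
    obtain ⟨e, he⟩ := mem_sat_iff.1 (ht ▸ subset_span hm)
    exact eventually_atTop.2 ⟨e, fun _ h ↦ (Ideal.pow_le_pow_right h).trans he⟩
  obtain ⟨e, he⟩ := ((Finset.eventually_all t).2 eventually_le).exists
  refine ⟨e, ?_⟩
  rw [← ht, colon_span]
  exact fun r hr ↦ mem_colon.2 fun m hm ↦ mem_colon_singleton.1 (he m hm hr)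

lemma eventually_pow_smul_top_inf_sat_le [IsNoetherianRing R] [Module.Finite R M]
    (J : Ideal R) (K : Submodule R M) :
    ∀ᶠ k in atTop, ∀ c, J ^ (c + k) • ⊤ ⊓ sat J K ≤ J ^ c • K := by
  obtain ⟨e, he⟩ := exists_pow_le_colon_sat J K
  obtain ⟨l, hl⟩ := J.exists_pow_inf_eq_pow_smul (sat J K)
  refine eventually_atTop.2 ⟨e + l, fun k hk c ↦ ?_⟩
  calc J ^ (c + k) • ⊤ ⊓ sat J K
      = J ^ (c + k - l) • (J ^ l • ⊤ ⊓ sat J K) := hl _ (by lia)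
    _ ≤ J ^ (c + e) • sat J K :=
      smul_mono (Ideal.pow_le_pow_right (by lia)) inf_le_right
    _ = J ^ c • J ^ e • sat J K := by rw [pow_add, ← smul_eq_mul, smul_assoc]
    _ ≤ J ^ c • K := smul_mono_right _ (smul_le.2 fun r hr m hm ↦ mem_colon.1 (he hr) m hm)

lemma pow_smul_top_inf_sat_prod_le {J : Ideal R} {k : ℕ} {s : Multiset R}
    (hs : ∀ x ∈ s, IsSMulRegular M x)
    (hk : ∀ x ∈ s, ∀ c, (J ^ (c + k) • ⊤ : Submodule R M) ⊓ sat J (x • ⊤) ≤ J ^ c • x • ⊤) :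
    (J ^ (k * s.card) • ⊤ : Submodule R M) ⊓ sat J (s.prod • ⊤) ≤ s.prod • ⊤ := by
  induction s using Multiset.induction_on with
  | empty => simp
  | cons x s ih =>
    rw [Multiset.forall_mem_cons] at hs hk
    rintro m ⟨hmJ, hm⟩
    rw [Multiset.prod_cons, mul_smul] at hm ⊢
    have hmx : m ∈ sat J (x • ⊤) := by
      obtain ⟨e, he⟩ := mem_sat_iff.1 hm
      exact mem_sat_iff.2
        ⟨e, he.trans (colon_mono (smul_mono_right x le_top) subset_rfl)⟩
    have hmJx : m ∈ x • J ^ (k * s.card) • (⊤ : Submodule R M) :=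
      (map_smul'' _ _ _).ge (hk.1 (k * s.card) ⟨by simpa [mul_add] using hmJ, hmx⟩)
    obtain ⟨v, hvJ, rfl⟩ := (mem_smul_pointwise_iff_exists _ _ _).1 hmJx
    exact smul_mem_pointwise_smul _ _ _
      (ih hs.2 hk.2 ⟨hvJ, mem_sat_of_smul_mem_sat_smul hs.1 hm⟩)

end Saturation

section AssociatedPrimes

open scoped Pointwise

lemma exists_colon_singleton_mem_associatedPrimes [IsNoetherianRing R] {K L : Submodule R M}
    (h : ¬ L ≤ K) : ∃ m ∈ L, K.colon {m} ∈ associatedPrimes R (M ⧸ K) := by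
  have : Nontrivial (L.map K.mkQ) := by
    rwa [nontrivial_iff_ne_bot, ne_eq, ← LinearMap.le_ker_iff_map, ker_mkQ]
  obtain ⟨P, hP⟩ := associatedPrimes.nonempty R (L.map K.mkQ)
  obtain ⟨-, ⟨_, m, hm, rfl⟩, hPm⟩ := isAssociatedPrime_iff.1 hP
  refine ⟨m, hm, ?_⟩
  convert associatedPrimes.subset_of_injective (L.map K.mkQ).injective_subtype hP
  ext r
  simp [hPm, mem_colon_singleton, ← Submodule.Quotient.mk_smul]

lemma pow_smul_top_inf_sat_le_of_associatedPrimes [IsNoetherianRing R] {K : Submodule R M} {n : ℕ}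
    (h : ∀ P ∈ associatedPrimes R (M ⧸ K), P ^ n • ⊤ ⊓ sat P K ≤ K) (J : Ideal R) :
    J ^ n • ⊤ ⊓ sat J K ≤ K := by
  by_contra hJ
  obtain ⟨m, ⟨hmJ, hm⟩, hP⟩ := exists_colon_singleton_mem_associatedPrimes hJ
  obtain ⟨e, he⟩ := mem_sat_iff.1 hm
  have hJP : J ≤ K.colon {m} := hP.isPrime.le_of_pow_le he
  have hmK : m ∈ K := h _ hP
    ⟨smul_mono_left (Ideal.pow_right_mono hJP n) hmJ, mem_sat_iff.2 ⟨1, (pow_one _).le⟩⟩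
  exact hP.isPrime.ne_top (by simpa using hmK)

-- The exact sequence `0 → M ⧸ K → N ⧸ f(K) → N ⧸ f(M) → 0`.
lemma associatedPrimes_quotient_map_subset {N : Type*} [AddCommGroup N] [Module R N]
    {f : M →ₗ[R] N} (hf : Function.Injective f) (K : Submodule R M) :
    associatedPrimes R (N ⧸ K.map f) ⊆
      associatedPrimes R (M ⧸ K) ∪ associatedPrimes R (N ⧸ f.range) := by
  refine associatedPrimes.subset_union_of_exact (f := mapQ K (K.map f) f (le_comap_map f K))
    (g := factor LinearMap.map_le_range) (LinearMap.ker_eq_bot.1 ?_) (LinearMap.exact_iff.2 ?_)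
  · rw [ker_mapQ, comap_map_eq_of_injective hf, ← LinearMap.le_ker_iff_map, ker_mkQ]
  · rw [range_mapQ, factor, ker_mapQ, comap_id]

lemma associatedPrimes_quotient_smul_subset {x : R} (hx : IsSMulRegular M x)
    (K : Submodule R M) :
    associatedPrimes R (M ⧸ x • K) ⊆
      associatedPrimes R (M ⧸ K) ∪ associatedPrimes R (M ⧸ (x • ⊤ : Submodule R M)) := by
  have smul_top_eq_range : (x • ⊤ : Submodule R M) = (LinearMap.lsmul R M x).range :=
    (LinearMap.range_eq_map _).symm
  rw [smul_top_eq_range]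
  exact associatedPrimes_quotient_map_subset (f := LinearMap.lsmul R M x) hx K

lemma associatedPrimes_quotient_prod_smul_top_subset {s : Multiset R}
    (hs : ∀ x ∈ s, IsSMulRegular M x) :
    associatedPrimes R (M ⧸ (s.prod • ⊤ : Submodule R M)) ⊆
      ⋃ x ∈ s, associatedPrimes R (M ⧸ (x • ⊤ : Submodule R M)) := by
  induction s using Multiset.induction_on with
  | empty =>
    rw [Multiset.prod_zero, one_smul, associatedPrimes.eq_empty_of_subsingleton]
    exact Set.empty_subset _
  | cons x s ih =>
    rw [Multiset.forall_mem_cons] at hs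
    rw [Multiset.prod_cons, mul_smul]
    simp only [Multiset.mem_cons, Set.iUnion_iUnion_eq_or_left]
    exact (associatedPrimes_quotient_smul_subset hs.1 _).trans
      (Set.union_subset ((ih hs.2).trans Set.subset_union_right) Set.subset_union_left)

theorem exists_pow_smul_top_inf_sat_prod_le [IsNoetherianRing R] [Module.Finite R M]
    {X : Set R} (hX : X.Finite) (hreg : ∀ x ∈ X, IsSMulRegular M x) :
    ∃ k : ℕ, ∀ s : Multiset R, (∀ x ∈ s, x ∈ X) → ∀ J : Ideal R,
      (J ^ (k * s.card) • ⊤ : Submodule R M) ⊓ sat J (s.prod • ⊤) ≤ s.prod • ⊤ := by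
  have primes_finite :
      (⋃ x ∈ X, associatedPrimes R (M ⧸ (x • ⊤ : Submodule R M))).Finite :=
    hX.biUnion fun x _ ↦ associatedPrimes.finite R _
  obtain ⟨k, hk⟩ := (primes_finite.eventually_all.2 fun P _ ↦ hX.eventually_all.2 fun x _ ↦
    eventually_pow_smul_top_inf_sat_le P (x • ⊤ : Submodule R M)).exists
  refine ⟨k, fun s hs ↦ pow_smul_top_inf_sat_le_of_associatedPrimes fun P hP ↦ ?_⟩
  have hs_reg : ∀ x ∈ s, IsSMulRegular M x := fun x hx ↦ hreg x (hs x hx)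
  have hPX := Set.biUnion_subset_biUnion_left hs
    (associatedPrimes_quotient_prod_smul_top_subset hs_reg hP)
  exact pow_smul_top_inf_sat_prod_le hs_reg fun x hx ↦ hk P hPX x (hs x hx)

end AssociatedPrimes

section Transfer

variable {S N : Type*} [CommRing S] [Algebra R S] [AddCommGroup N] [Module R N] [Module S N]
  [IsScalarTower R S N] (f : M →ₗ[R] N)

lemma pow_smul_top_inf_sat_le_of_eq_comap {K : Submodule R M} {K' : Submodule S N}
    (hK : K = (K'.restrictScalars R).comap f) {J : Ideal R} {n : ℕ}
    (h : J.map (algebraMap R S) ^ n • ⊤ ⊓ sat (J.map (algebraMap R S)) K' ≤ K') :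
    J ^ n • ⊤ ⊓ sat J K ≤ K := by
  have pow_smul_top_le : J ^ n • ⊤ ≤
      ((J.map (algebraMap R S) ^ n • ⊤ : Submodule S N).restrictScalars R).comap f :=
    smul_le.2 fun r hr m _ ↦ by
      rw [mem_comap, map_smul, ← algebraMap_smul S r (f m), restrictScalars_mem, ← Ideal.map_pow]
      exact smul_mem_smul (Ideal.mem_map_of_mem _ hr) mem_top
  have sat_le : sat J K ≤ ((sat (J.map (algebraMap R S)) K').restrictScalars R).comap f := by
    intro m hm
    obtain ⟨e, he⟩ := mem_sat_iff.1 hm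
    refine mem_sat_iff.2 ⟨e, ?_⟩
    rw [← Ideal.map_pow, Ideal.map_le_iff_le_comap]
    intro r hr
    simpa [hK, mem_colon_singleton] using he hr
  rw [hK]
  exact fun m hm ↦ h ⟨pow_smul_top_le hm.1, sat_le (hK ▸ hm.2)⟩

end Transfer

section ExtendedRees

open AddMonoidAlgebra
open scoped Pointwise

variable {G ι : Type*} [AddCommMonoid G]

/-- The ideal of all `a` with `a t^g ∈ B`, where `t^g` is the monomial of exponent `g`. -/
noncomputable def coeffIdeal (B : Subalgebra R (AddMonoidAlgebra R G)) (g : G) : Ideal R :=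
  B.toSubmodule.comap (lsingle g)

lemma mem_coeffIdeal {B : Subalgebra R (AddMonoidAlgebra R G)} {g : G} {a : R} :
    a ∈ coeffIdeal B g ↔ single g a ∈ B :=
  Iff.rfl

lemma coeffIdeal_mul_le (B : Subalgebra R (AddMonoidAlgebra R G)) (g h : G) :
    coeffIdeal B g * coeffIdeal B h ≤ coeffIdeal B (g + h) :=
  Ideal.mul_le.2 fun a ha b hb ↦ by
    rw [mem_coeffIdeal, ← single_mul_single]
    exact B.mul_mem ha hb

lemma coeffIdeal_zero (B : Subalgebra R (AddMonoidAlgebra R G)) : coeffIdeal B 0 = 1 :=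
  (Ideal.one_eq_top (R := R)).symm ▸ (Ideal.eq_top_iff_one _).2 B.one_mem

lemma prod_coeffIdeal_le (B : Subalgebra R (AddMonoidAlgebra R G)) (s : Finset ι) (g : ι → G) :
    ∏ i ∈ s, coeffIdeal B (g i) ≤ coeffIdeal B (∑ i ∈ s, g i) := by
  classical
  induction s using Finset.induction_on with
  | empty => simp [coeffIdeal_zero]
  | insert i s hi ih =>
    rw [Finset.prod_insert hi, Finset.sum_insert hi]
    exact (mul_le_mul_right ih _).trans (coeffIdeal_mul_le B _ _)

lemma coeffIdeal_pow_le (B : Subalgebra R (AddMonoidAlgebra R G)) (g : G) (n : ℕ) :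
    coeffIdeal B g ^ n ≤ coeffIdeal B (n • g) := by
  simpa using prod_coeffIdeal_le B (Finset.range n) fun _ ↦ g

lemma pow_toNat_le_coeffIdeal {B : Subalgebra R (AddMonoidAlgebra R G)} {K : Ideal R} {g : ℤ →+ G}
    (hpos : K ≤ coeffIdeal B (g 1)) (hneg : 1 ∈ coeffIdeal B (g (-1))) (z : ℤ) :
    K ^ z.toNat ≤ coeffIdeal B (g z) := by
  obtain ⟨n, rfl | rfl⟩ := z.eq_nat_or_neg
  · simpa [← map_nsmul] using (Ideal.pow_right_mono hpos n).trans (coeffIdeal_pow_le B _ n)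
  · calc K ^ (-n : ℤ).toNat
        ≤ coeffIdeal B (g (-1)) ^ n := by
          rw [(Ideal.eq_top_iff_one _).2 hneg, Ideal.top_pow]
          exact le_top
      _ ≤ coeffIdeal B (n • g (-1)) := coeffIdeal_pow_le B _ n
      _ = coeffIdeal B (g (-n)) := by rw [← map_nsmul, smul_neg, nsmul_one]

variable [Fintype ι] (I : ι → Ideal R)

/-- The product `∏ i, I i ^ d i` for integer exponents `d`, where a negative power of an ideal is
the unit ideal. -/
def mixedPow (d : ι → ℤ) : Ideal R :=
  ∏ i, I i ^ (d i).toNat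

lemma mixedPow_natCast (n : ι → ℕ) : mixedPow I (fun i ↦ n i) = ∏ i, I i ^ n i := by
  simp only [mixedPow, Int.toNat_natCast]

lemma mixedPow_of_nonpos {d : ι → ℤ} (hd : d ≤ 0) : mixedPow I d = ⊤ := by
  simp [mixedPow, fun i ↦ Int.toNat_of_nonpos (hd i)]

lemma mixedPow_single_one [DecidableEq ι] (i : ι) : mixedPow I (Pi.single i 1) = I i := by
  rw [mixedPow, Fintype.prod_eq_single i fun j hj ↦ by simp [hj]]
  simp

lemma mixedPow_mul_le (d e : ι → ℤ) : mixedPow I d * mixedPow I e ≤ mixedPow I (d + e) := by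
  simp only [mixedPow, ← Finset.prod_mul_distrib, ← pow_add]
  exact Finset.prod_le_prod' fun i _ ↦ Ideal.pow_le_pow_right (by simp only [Pi.add_apply]; lia)

variable {I} in
lemma coeff_single_mem_mixedPow {d : ι → ℤ} {a : R} (ha : a ∈ mixedPow I d) (e : ι → ℤ) :
    (single d a).coeff e ∈ mixedPow I e := by
  classical
  rw [coeff_single, Finsupp.single_apply]
  split_ifs with h
  · exact h ▸ ha
  · exact zero_mem _

/-- The extended multi-Rees algebra `⨁ d, I^d t^d`, with `d` ranging over all integer exponents,
as a subalgebra of the Laurent polynomial ring in the variables `t i`. -/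
def extendedReesAlgebra : Subalgebra R (AddMonoidAlgebra R (ι → ℤ)) where
  carrier := {p | ∀ d, p.coeff d ∈ mixedPow I d}
  add_mem' hp hq d := add_mem (hp d) (hq d)
  mul_mem' {p q} hp hq d := by
    classical
    rw [coeff_mul]
    refine sum_mem fun a _ ↦ sum_mem fun b _ ↦ ?_
    dsimp only
    split_ifs with h
    · exact h ▸ mixedPow_mul_le I a b (Ideal.mul_mem_mul (hp a) (hq b))
    · exact zero_mem _
  algebraMap_mem' _ := coeff_single_mem_mixedPow (by simp [mixedPow_of_nonpos])

variable {I} in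
lemma single_mem_extendedReesAlgebra {d : ι → ℤ} {a : R} :
    single d a ∈ extendedReesAlgebra I ↔ a ∈ mixedPow I d :=
  ⟨fun h ↦ by simpa using h d, coeff_single_mem_mixedPow⟩

section InverseVariables

variable [DecidableEq ι]

variable {I} in
lemma extendedReesAlgebra_le {B : Subalgebra R (AddMonoidAlgebra R (ι → ℤ))}
    (hpos : ∀ i, I i ≤ coeffIdeal B (Pi.single i 1))
    (hneg : ∀ i, 1 ∈ coeffIdeal B (Pi.single i (-1))) : extendedReesAlgebra I ≤ B := by
  have mixedPow_le (d : ι → ℤ) : mixedPow I d ≤ coeffIdeal B d := by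
    calc mixedPow I d
        ≤ ∏ i, coeffIdeal B (Pi.single i (d i)) := Finset.prod_le_prod' fun i _ ↦
          pow_toNat_le_coeffIdeal (g := AddMonoidHom.single (fun _ ↦ ℤ) i) (hpos i) (hneg i) (d i)
      _ ≤ coeffIdeal B (∑ i, Pi.single i (d i)) := prod_coeffIdeal_le B _ _
      _ = coeffIdeal B d := by rw [Finset.univ_sum_single]
  intro p hp
  rw [← p.sum_coeff_single]
  exact sum_mem fun d _ ↦ mixedPow_le d (hp d)

/-- The element `t_i⁻¹` of the extended multi-Rees algebra. -/
noncomputable def invVar (i : ι) : extendedReesAlgebra I :=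
  ⟨single (Pi.single i (-1)) 1, single_mem_extendedReesAlgebra.2 <| by
    simp [mixedPow_of_nonpos]⟩

lemma isSMulRegular_invVar (i : ι) : IsSMulRegular (extendedReesAlgebra I) (invVar I i) := by
  have invVar_isUnit : IsUnit (invVar I i : AddMonoidAlgebra R (ι → ℤ)) :=
    IsUnit.of_mul_eq_one (single (Pi.single i 1) 1) <| by
      simp [invVar, single_mul_single, ← Pi.single_add, one_def]
  exact fun u v h ↦ Subtype.ext (invVar_isUnit.isSMulRegular _ (congrArg Subtype.val h))

lemma coe_prod_invVar_pow (n : ι → ℕ) :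
    ((∏ i, invVar I i ^ n i : extendedReesAlgebra I) : AddMonoidAlgebra R (ι → ℤ)) =
      single (-fun i ↦ (n i : ℤ)) 1 := by
  have sum_nsmul_single : ∑ i, n i • Pi.single i (-1) = -fun i ↦ (n i : ℤ) := by
    ext j
    simp [Finset.sum_apply, Pi.single_apply]
  simp only [SubmonoidClass.coe_finsetProd, SubmonoidClass.coe_pow, invVar, single_pow, one_pow,
    prod_single, Finset.prod_const_one, sum_nsmul_single]

lemma prod_pow_eq_comap_prod_invVar_pow (n : ι → ℕ) :
    ∏ i, I i ^ n i = (((∏ i, invVar I i ^ n i) • ⊤ :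
      Ideal (extendedReesAlgebra I)).restrictScalars R).comap (Algebra.linearMap R _) := by
  ext a
  rw [← mixedPow_natCast, mem_comap, restrictScalars_mem, mem_smul_pointwise_iff_exists,
    Algebra.linearMap_apply]
  constructor
  · refine fun ha ↦ ⟨⟨_, single_mem_extendedReesAlgebra.2 ha⟩, mem_top, Subtype.ext ?_⟩
    rw [smul_eq_mul, MulMemClass.coe_mul, coe_prod_invVar_pow, single_mul_single]
    simp
  · rintro ⟨p, -, hp⟩
    have coeff_eq : p.1.coeff (fun i ↦ (n i : ℤ)) = a := by
      calc p.1.coeff (fun i ↦ (n i : ℤ))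
          = (single (-fun i ↦ (n i : ℤ)) 1 * p.1).coeff 0 := by simp
        _ = (algebraMap R (extendedReesAlgebra I) a).1.coeff 0 := by
          rw [← coe_prod_invVar_pow, ← MulMemClass.coe_mul, ← smul_eq_mul, hp]
        _ = a := by simp
    exact coeff_eq ▸ p.2 _

end InverseVariables

instance isNoetherianRing_extendedReesAlgebra [IsNoetherianRing R] :
    IsNoetherianRing (extendedReesAlgebra I) := by
  classical
  choose T hT using fun i ↦ IsNoetherian.noetherian (I i)
  let gens : Set (AddMonoidAlgebra R (ι → ℤ)) :=
    ⋃ i, insert ↑(invVar I i) (single (Pi.single i 1) '' (T i : Set R))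
  have gens_finite : gens.Finite :=
    Set.finite_iUnion fun i ↦ ((T i).finite_toSet.image _).insert _
  refine isNoetherianRing_of_fg (Subalgebra.fg_def.2 ⟨gens, gens_finite, le_antisymm ?_ ?_⟩)
  · refine Algebra.adjoin_le (Set.iUnion_subset fun i ↦ Set.insert_subset (invVar I i).2 ?_)
    rintro _ ⟨a, ha, rfl⟩
    refine single_mem_extendedReesAlgebra.2 ?_
    rw [mixedPow_single_one, ← hT i]
    exact subset_span ha
  · refine extendedReesAlgebra_le (fun i ↦ ?_) fun i ↦ ?_
    · rw [← hT i]
      refine span_le.2 fun a ha ↦ Algebra.subset_adjoin (Set.mem_iUnion.2 ⟨i, ?_⟩)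
      exact Set.mem_insert_of_mem _ ⟨a, ha, rfl⟩
    · exact Algebra.subset_adjoin (Set.mem_iUnion.2 ⟨i, Set.mem_insert _ _⟩)

theorem exists_pow_smul_top_inf_sat_prod_pow_le [IsNoetherianRing R] :
    ∃ k : ℕ, ∀ (n : ι → ℕ) (J : Ideal R),
      J ^ (k * ∑ i, n i) • ⊤ ⊓ sat J (∏ i, I i ^ n i) ≤ ∏ i, I i ^ n i := by
  classical
  obtain ⟨k, hk⟩ := exists_pow_smul_top_inf_sat_prod_le (M := extendedReesAlgebra I)
    (Set.finite_range (invVar I))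
    (Set.forall_mem_range.2 (isSMulRegular_invVar I))
  refine ⟨k, fun n J ↦ pow_smul_top_inf_sat_le_of_eq_comap _
    (prod_pow_eq_comap_prod_invVar_pow I n) ?_⟩
  let s := ∑ i, Multiset.replicate (n i) (invVar I i)
  have s_prod : s.prod = ∏ i, invVar I i ^ n i := by
    simp [s, Multiset.prod_sum]
  have s_card : s.card = ∑ i, n i := by simp [s]
  have mem_range : ∀ x ∈ s, x ∈ Set.range (invVar I) := by
    intro x hx
    obtain ⟨i, -, hi⟩ := Multiset.mem_sum.1 hx
    exact ⟨i, (Multiset.eq_of_mem_replicate hi).symm⟩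
  rw [← s_prod, ← s_card]
  exact hk s mem_range _

end ExtendedRees

section Idealization

variable [Module Rᵐᵒᵖ M] [IsCentralScalar R M]

lemma smul_top_eq_comap_inrHom (K : Ideal R) :
    (K • ⊤ : Submodule R M) = ((K.map (algebraMap R (TrivSqZeroExt R M))).restrictScalars R).comap
      (TrivSqZeroExt.inrHom R M) := by
  rw [← Ideal.smul_top_eq_map]
  exact le_antisymm (smul_top_le_comap_smul_top K (TrivSqZeroExt.inrHom R M)) fun _ hm ↦
    smul_top_le_comap_smul_top K (TrivSqZeroExt.sndHom R M) hm

variable (R M) in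
lemma isNoetherianRing_trivSqZeroExt [IsNoetherianRing R] [Module.Finite R M] :
    IsNoetherianRing (TrivSqZeroExt R M) :=
  have : Module.Finite R (TrivSqZeroExt R M) := inferInstanceAs (Module.Finite R (R × M))
  IsNoetherianRing.of_finite R _

end Idealization

/-- Theorem 3.3: there is `k` such that for all exponents `n` and all ideals `J`,
`J^{k|n|} M ⊓ (I₁^{n₁}⋯I_t^{n_t} M :_M J^∞) ⊆ I₁^{n₁}⋯I_t^{n_t} M`. -/
theorem uniform_AR_saturation [IsNoetherianRing R] [Module.Finite R M]
    (t : ℕ) (I : Fin t → Ideal R) :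
    ∃ k : ℕ, ∀ (n : Fin t → ℕ) (J : Ideal R),
      (J ^ (k * ∑ i, n i) • ⊤ : Submodule R M) ⊓ sat J ((∏ i, I i ^ n i) • ⊤) ≤
        (∏ i, I i ^ n i) • (⊤ : Submodule R M) := by
  let : Module Rᵐᵒᵖ M := Module.compHom M ((RingHom.id R).fromOpposite mul_comm)
  have : IsCentralScalar R M := ⟨fun _ _ ↦ rfl⟩
  have := isNoetherianRing_trivSqZeroExt R M
  obtain ⟨k, hk⟩ :=
    exists_pow_smul_top_inf_sat_prod_pow_le fun i ↦ (I i).map (algebraMap R (TrivSqZeroExt R M))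
  have prod_map_pow (n : Fin t → ℕ) :
      ∏ i, (I i).map (algebraMap R (TrivSqZeroExt R M)) ^ n i =
        (∏ i, I i ^ n i).map (algebraMap R (TrivSqZeroExt R M)) := by
    simp only [← Ideal.map_pow]
    exact (_root_.map_prod (Ideal.mapHom _) _ _).symm
  refine ⟨k, fun n J ↦
    pow_smul_top_inf_sat_le_of_eq_comap (TrivSqZeroExt.inrHom R M) ?_ (hk n (J.map _))⟩
  rw [prod_map_pow, smul_top_eq_comap_inrHom]
end

section
/- Let R be a Noetherian ring, M a finitely generated R-module, and I₁, ..., I_t ideals. Then there exists k ∈ ℕ such that for every n = (n₁,...,n_t) ∈ ℕ^t there exists an irredundant minimal primary decomposition I₁^{n₁}⋯I_t^{n_t} M = Q₁ ∩ ... ∩ Q_r where each Q_i is P_i-primary and P_i^{k(n₁+⋯+n_t)} M ⊆ Q_i for all i. -/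
open Submodule

variable {R M : Type*} [CommRing R] [AddCommGroup M] [Module R M]

/-!
Write `I^n = I₁^{n₁}⋯I_t^{n_t}` and `|n| = n₁ + ⋯ + n_t`. Let `X` be the extended multi-Rees module
of `M`, a finite module over the Noetherian ring `S = R[I₁T₁, …, I_tT_t, T₁⁻¹, …, T_t⁻¹]`. The
elements `u_i = T_i⁻¹` of `S` are `X`-regular and `I^n M` is the contraction of `u^n X` to `M`.
Filtering `X / u^n X` by copies of the `X / u_i X` has two consequences:

* every associated prime of `M / I^n M` is associated to some `X / u_i X` over `R`, so that only
  finitely many primes occur as `n` varies;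
* by Artin–Rees, for each ideal `P` one step of the filtration costs a bounded power of `P`, so that
  `P^{k|n|} M ∩ (I^n M : P) ⊆ I^n M` for some `k` independent of `n`.

Finally, if `P^m M ∩ (N : P) ⊆ N` for an associated prime `P` of `M / N`, then the `P`-saturation of
`P^m M + N` is `P`-primary and contains no `x` with `(N : x) = P`. These saturations intersect in
`N`, since any submodule strictly above `N` contains such an `x` for some `P`.
-/

section Colon

/-- The colon submodule `(N :_M J)` of the elements of `M` that `J` multiplies into `N`. Mathlib's
`Submodule.colon` is the ideal-valued colon. -/
def colonSubmodule (N : Submodule R M) (J : Ideal R) : Submodule R M :=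
  ⨅ r ∈ J, N.comap (LinearMap.lsmul R M r)

theorem mem_colonSubmodule {N : Submodule R M} {J : Ideal R} {x : M} :
    x ∈ colonSubmodule N J ↔ ∀ r ∈ J, r • x ∈ N := by
  simp [colonSubmodule]

theorem smul_colonSubmodule_le (N : Submodule R M) (J : Ideal R) : J • colonSubmodule N J ≤ N :=
  smul_le.2 fun r hr _ hx ↦ mem_colonSubmodule.1 hx r hr

end Colon

section ArtinRees

open Pointwise

variable [IsNoetherianRing R] [Module.Finite R M]

theorem exists_pow_smul_top_inf_colonSubmodule_le (J : Ideal R) (N : Submodule R M) :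
    ∃ a : ℕ, J ^ a • ⊤ ⊓ colonSubmodule N J ≤ N := by
  obtain ⟨a, ha⟩ := J.exists_pow_inf_eq_pow_smul (colonSubmodule N J)
  refine ⟨a + 1, ?_⟩
  calc J ^ (a + 1) • ⊤ ⊓ colonSubmodule N J
      = J • (J ^ a • ⊤ ⊓ colonSubmodule N J) := by simpa using ha (a + 1) (Nat.le_succ a)
    _ ≤ J • colonSubmodule N J := smul_mono_right _ inf_le_right
    _ ≤ N := smul_colonSubmodule_le N J

theorem exists_comap_pow_smul_top_le {M' : Type*} [AddCommGroup M'] [Module R M'] {f : M' →ₗ[R] M}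
    (hf : Function.Injective f) (J : Ideal R) :
    ∃ b : ℕ, ∀ m, (J ^ (m + b) • ⊤ : Submodule R M).comap f ≤ J ^ m • ⊤ := by
  obtain ⟨b, hb⟩ := J.exists_pow_inf_eq_pow_smul (LinearMap.range f)
  refine ⟨b, fun m ↦ ?_⟩
  rw [← comap_map_eq_of_injective hf (J ^ m • ⊤), map_smul'', Submodule.map_top]
  intro x hx
  have hfx : f x ∈ J ^ (m + b) • ⊤ ⊓ LinearMap.range f := ⟨hx, x, rfl⟩
  rw [hb (m + b) (Nat.le_add_left b m), Nat.add_sub_cancel] at hfx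
  exact (smul_mono_right _ inf_le_right : _ ≤ J ^ m • LinearMap.range f) hfx

theorem exists_pow_smul_top_inf_colonSubmodule_mul_le {u : R} (hu : IsSMulRegular M u)
    (J : Ideal R) :
    ∃ k : ℕ, ∀ (v : R) (m : ℕ),
      (J ^ m • ⊤ ⊓ colonSubmodule (v • ⊤) J : Submodule R M) ≤ v • ⊤ →
        (J ^ (m + k) • ⊤ ⊓ colonSubmodule ((u * v) • ⊤) J : Submodule R M) ≤ (u * v) • ⊤ := by
  obtain ⟨a, ha⟩ := exists_pow_smul_top_inf_colonSubmodule_le J (u • ⊤ : Submodule R M)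
  obtain ⟨b, hb⟩ := exists_comap_pow_smul_top_le (f := LinearMap.lsmul R M u) hu J
  refine ⟨a + b, fun v m hv y ⟨hyJ, hy⟩ ↦ ?_⟩
  have mem_smul_top {w : R} {x : M} : x ∈ (w • ⊤ : Submodule R M) ↔ ∃ z, w • z = x := by
    simp [mem_smul_pointwise_iff_exists]
  replace hy : ∀ r ∈ J, ∃ x, (u * v) • x = r • y := fun r hr ↦
    mem_smul_top.1 (mem_colonSubmodule.1 hy r hr)
  obtain ⟨z, rfl⟩ : ∃ z, u • z = y := by
    refine mem_smul_top.1 (ha ⟨smul_mono_left (Ideal.pow_le_pow_right (by lia)) hyJ,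
      mem_colonSubmodule.2 fun r hr ↦ ?_⟩)
    obtain ⟨x, hx⟩ := hy r hr
    exact mem_smul_top.2 ⟨v • x, by rw [← hx, mul_smul]⟩
  have hzJ : z ∈ (J ^ m • ⊤ : Submodule R M) :=
    hb m (smul_mono_left (Ideal.pow_le_pow_right (by lia)) hyJ)
  obtain ⟨x, rfl⟩ : ∃ x, v • x = z := by
    refine mem_smul_top.1 (hv ⟨hzJ, mem_colonSubmodule.2 fun r hr ↦ ?_⟩)
    obtain ⟨x, hx⟩ := hy r hr
    exact mem_smul_top.2 ⟨x, hu ((smul_smul u v x).trans (hx.trans (smul_comm r u z)))⟩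
  exact mem_smul_top.2 ⟨x, mul_smul u v x⟩

theorem exists_pow_smul_top_inf_colonSubmodule_multiset_prod_le {σ : Type*} [Finite σ] {u : σ → R}
    (hu : ∀ i, IsSMulRegular M (u i)) (J : Ideal R) :
    ∃ k : ℕ, ∀ s : Multiset σ,
      (J ^ (k * s.card) • ⊤ ⊓ colonSubmodule ((s.map u).prod • ⊤) J : Submodule R M) ≤
        (s.map u).prod • ⊤ := by
  cases nonempty_fintype σ
  choose k hk using fun i ↦ exists_pow_smul_top_inf_colonSubmodule_mul_le (hu i) J
  refine ⟨∑ i, k i, fun s ↦ ?_⟩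
  induction s using Multiset.induction with
  | empty => simp
  | cons i s ih =>
    rw [Multiset.map_cons, Multiset.prod_cons, Multiset.card_cons, mul_add_one]
    have hki : k i ≤ ∑ j, k j := Finset.single_le_sum_of_canonicallyOrdered (Finset.mem_univ i)
    exact le_trans (inf_le_inf_right _ (smul_mono_left (Ideal.pow_le_pow_right (by lia))))
      (hk i _ _ ih)

end ArtinRees

section AssociatedPrimes

open Pointwise

variable {S X : Type*} [CommRing S] [Algebra R S] [AddCommGroup X] [Module R X] [Module S X]
  [IsScalarTower R S X]

theorem associatedPrimes_subset_image_comap [IsNoetherianRing S] :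
    associatedPrimes R X ⊆ Ideal.comap (algebraMap R S) '' associatedPrimes S X := by
  rintro P ⟨hP, x, hx⟩
  have hcomap : ((⊥ : Submodule S X).colon {x}).comap (algebraMap R S) =
      (⊥ : Submodule R X).colon {x} := by
    ext r
    simp [mem_colon_singleton]
  have hmin : P ∈ (((⊥ : Submodule S X).colon {x}).comap (algebraMap R S)).minimalPrimes := by
    rw [hcomap, ← Ideal.radical_minimalPrimes, ← hx, Ideal.minimalPrimes_eq_subsingleton_self]
    rfl
  obtain ⟨p, hp, rfl⟩ := Ideal.exists_minimalPrimes_comap_eq (algebraMap R S) P hmin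
  exact ⟨p, isAssociatedPrime_iff.2 ⟨hp.1.1, exists_eq_colon_of_mem_minimalPrimes hp⟩, rfl⟩

variable (R) in
theorem finite_associatedPrimes_of_algebra (S : Type*) [CommRing S] [Algebra R S] [Module S X]
    [IsScalarTower R S X] [IsNoetherianRing S] [Module.Finite S X] :
    (associatedPrimes R X).Finite :=
  ((associatedPrimes.finite S X).image _).subset associatedPrimes_subset_image_comap

theorem associatedPrimes_quotSMulTop_mul_subset {u : S} (hu : IsSMulRegular X u) (v : S) :
    associatedPrimes R (QuotSMulTop (u * v) X) ⊆
      associatedPrimes R (QuotSMulTop u X) ∪ associatedPrimes R (QuotSMulTop v X) := by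
  have hcomap : ((u * v) • ⊤ : Submodule S X).comap (LinearMap.lsmul S X u) = v • ⊤ := by
    rw [mul_smul]
    exact comap_map_eq_of_injective (f := LinearMap.lsmul S X u) hu _
  have hle : ((u * v) • ⊤ : Submodule S X) ≤ u • ⊤ := by
    rw [mul_smul]
    exact smul_mono_right u le_top
  let f : QuotSMulTop v X →ₗ[S] QuotSMulTop (u * v) X := mapQ _ _ (LinearMap.lsmul S X u) hcomap.ge
  let g : QuotSMulTop (u * v) X →ₗ[S] QuotSMulTop u X := factor hle
  have hf : Function.Injective f := by
    rw [← LinearMap.ker_eq_bot, ker_mapQ, hcomap, mkQ_map_self]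
  have hfg : Function.Exact f g := by
    rw [LinearMap.exact_iff, ker_mapQ, range_mapQ, comap_id, ← Submodule.map_top]
    rfl
  rw [Set.union_comm]
  exact associatedPrimes.subset_union_of_exact (f := f.restrictScalars R)
    (g := g.restrictScalars R) hf hfg

theorem associatedPrimes_quotSMulTop_multiset_prod_subset {σ : Type*} {u : σ → S}
    (hu : ∀ i, IsSMulRegular X (u i)) (s : Multiset σ) :
    associatedPrimes R (QuotSMulTop (s.map u).prod X) ⊆
      ⋃ i, associatedPrimes R (QuotSMulTop (u i) X) := by
  induction s using Multiset.induction with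
  | empty =>
    have : Subsingleton (QuotSMulTop ((0 : Multiset σ).map u).prod X) :=
      Submodule.Quotient.subsingleton_iff.2 (by simp)
    exact associatedPrimes.eq_empty_of_subsingleton.trans_subset (Set.empty_subset _)
  | cons i s ih =>
    rw [Multiset.map_cons, Multiset.prod_cons]
    exact (associatedPrimes_quotSMulTop_mul_subset (hu i) _).trans
      (Set.union_subset (Set.subset_iUnion_of_subset i subset_rfl) ih)

end AssociatedPrimes

section QuotientAssociatedPrimes

theorem le_of_forall_isAssociatedPrime [IsNoetherianRing R] {N L : Submodule R M}
    (h : ∀ P x, N.IsAssociatedPrime P → P = N.colon {x} → x ∉ L) : L ≤ N := by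
  by_contra hLN
  obtain ⟨y, hyL, hyN⟩ := SetLike.not_le_iff_exists.1 hLN
  have : Nontrivial (L ⧸ N.comap L.subtype) :=
    Quotient.nontrivial_iff.2 fun htop ↦ hyN (htop.ge (mem_top (x := ⟨y, hyL⟩)))
  obtain ⟨P, hP⟩ := associatedPrimes.nonempty R (L ⧸ N.comap L.subtype)
  rw [associatedPrimes_quotient] at hP
  obtain ⟨hPprime, x, hx⟩ := Submodule.isAssociatedPrime_iff.1 hP
  have hxN : P = N.colon {(x : M)} := hx.trans (by ext r; simp [mem_colon_singleton])
  exact h P x (Submodule.isAssociatedPrime_iff.2 ⟨hPprime, x, hxN⟩) hxN x.2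

theorem isMinPD_of_associatedPrimes [IsNoetherianRing R] {N : Submodule R M} {r : ℕ}
    {P : Fin r → Ideal R} {Q : Fin r → Submodule R M}
    (hQ : ∀ i, associatedPrimes R (M ⧸ Q i) = {P i}) (hP : Function.Injective P)
    (hN : N = ⨅ i, Q i) (hPN : ∀ i, N.IsAssociatedPrime (P i)) : IsMinPD N P Q := by
  refine ⟨hQ, hP, hN, fun i hNi ↦ ?_⟩
  obtain ⟨hprime, x, hx⟩ := Submodule.isAssociatedPrime_iff.1 (hPN i)
  have hinf : P i = ({i}ᶜ : Finset (Fin r)).inf fun j ↦ (Q j).colon {x} := by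
    rw [hx, ← colon_finsetInf, hNi, Finset.inf_eq_iInf]
    simp
  obtain ⟨j, hji, hj⟩ := Ideal.eq_inf_of_isPrime_inf (hinf ▸ hprime)
  have hPj : P i ∈ associatedPrimes R (M ⧸ Q j) := by
    rw [associatedPrimes_quotient]
    exact Submodule.isAssociatedPrime_iff.2 ⟨hprime, x, hinf.trans hj.symm⟩
  rw [hQ j] at hPj
  exact Finset.mem_compl.1 hji (Finset.mem_singleton.2 (hP hPj.symm))

end QuotientAssociatedPrimes

section PrimeSaturation

/-- The `P`-saturation `{x | ∃ s ∉ P, s • x ∈ L}` of `L`: the contraction of `L_P` to `M`. It turns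
a submodule containing a power of `P` into a `P`-primary one. -/
noncomputable def primeSaturation (P : Ideal R) [P.IsPrime] (L : Submodule R M) : Submodule R M :=
  LinearMap.ker (LocalizedModule.mkLinearMap P.primeCompl (M ⧸ L) ∘ₗ L.mkQ)

variable {P : Ideal R} [P.IsPrime] {L : Submodule R M}

theorem mem_primeSaturation {x : M} : x ∈ primeSaturation P L ↔ ∃ s ∉ P, s • x ∈ L := by
  rw [primeSaturation, LinearMap.mem_ker, LinearMap.comp_apply,
    IsLocalizedModule.eq_zero_iff P.primeCompl]
  simp [Submonoid.smul_def, Ideal.mem_primeCompl_iff, ← Quotient.mk_smul]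

theorem le_primeSaturation : L ≤ primeSaturation P L := fun x hx ↦
  mem_primeSaturation.2 ⟨1, P.one_notMem, by rwa [one_smul]⟩

theorem mem_primeSaturation_of_smul_mem {s : R} {x : M} (hs : s ∉ P)
    (h : s • x ∈ primeSaturation P L) : x ∈ primeSaturation P L := by
  obtain ⟨t, ht, hts⟩ := mem_primeSaturation.1 h
  exact mem_primeSaturation.2 ⟨t * s, ‹P.IsPrime›.mul_notMem ht hs, by rwa [mul_smul]⟩

theorem associatedPrimes_quotient_primeSaturation [IsNoetherianRing R] {m : ℕ}
    (hm : P ^ m • ⊤ ≤ L) (htop : primeSaturation P L ≠ ⊤) :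
    associatedPrimes R (M ⧸ primeSaturation P L) = {P} := by
  have := Quotient.nontrivial_iff.2 htop
  refine (associatedPrimes.nonempty R (M ⧸ primeSaturation P L)).subset_singleton_iff.1 ?_
  rw [associatedPrimes_quotient]
  intro p hp
  obtain ⟨hprime, x, rfl⟩ := Submodule.isAssociatedPrime_iff.1 hp
  refine le_antisymm (fun s hs ↦ ?_) (fun a ha ↦ hprime.mem_of_pow_mem m ?_)
  · by_contra hsP
    refine hprime.ne_top ((colon_eq_top_iff_subset {x}).2 (Set.singleton_subset_iff.2 ?_))
    exact mem_primeSaturation_of_smul_mem hsP (mem_colon_singleton.1 hs)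
  · exact mem_colon_singleton.2
      (le_primeSaturation (hm (smul_mem_smul (Ideal.pow_mem_pow ha m) mem_top)))

theorem notMem_primeSaturation_pow_smul_top_sup {N : Submodule R M} {m : ℕ}
    (hm : P ^ m • ⊤ ⊓ colonSubmodule N P ≤ N) {x : M} (hx : P = N.colon {x}) :
    x ∉ primeSaturation P (P ^ m • ⊤ ⊔ N) := by
  rw [mem_primeSaturation]
  rintro ⟨s, hs, hsx⟩
  obtain ⟨y, hy, z, hz, hyz⟩ := mem_sup.1 hsx
  have hyN : y ∈ N := hm ⟨hy, mem_colonSubmodule.2 fun r hr ↦ by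
    have hrx : r • x ∈ N := mem_colon_singleton.1 (hx.le hr)
    rw [eq_sub_of_add_eq hyz, smul_sub, smul_comm]
    exact N.sub_mem (N.smul_mem s hrx) (N.smul_mem r hz)⟩
  exact hs (hx.ge (mem_colon_singleton.2 (hyz ▸ N.add_mem hyN hz)))

end PrimeSaturation

theorem exists_isMinPD_of_pow_smul_top_inf_colonSubmodule_le [IsNoetherianRing R]
    [Module.Finite R M] (N : Submodule R M) (e : Ideal R → ℕ)
    (he : ∀ P, N.IsAssociatedPrime P → P ^ e P • ⊤ ⊓ colonSubmodule N P ≤ N) :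
    ∃ (r : ℕ) (P : Fin r → Ideal R) (Q : Fin r → Submodule R M),
      IsMinPD N P Q ∧ ∀ i, P i ^ e (P i) • ⊤ ≤ Q i := by
  have hfin : Finite N.associatedPrimes :=
    associatedPrimes_quotient N ▸ associatedPrimes.finite R (M ⧸ N)
  let f := (Finite.equivFin N.associatedPrimes).symm
  let Q (P : N.associatedPrimes) : Submodule R M := primeSaturation P.1 (P.1 ^ e P.1 • ⊤ ⊔ N)
  have notMem_Q (P : N.associatedPrimes) {x : M} (hx : P.1 = N.colon {x}) : x ∉ Q P :=
    notMem_primeSaturation_pow_smul_top_sup (he P.1 P.2) hx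
  have hQ (P : N.associatedPrimes) : associatedPrimes R (M ⧸ Q P) = {P.1} := by
    obtain ⟨-, x, hx⟩ := Submodule.isAssociatedPrime_iff.1 P.2
    exact associatedPrimes_quotient_primeSaturation le_sup_left
      fun htop ↦ notMem_Q P hx (htop.ge mem_top)
  have hN : N = ⨅ i, Q (f i) := by
    refine le_antisymm (le_iInf fun i ↦ le_sup_right.trans le_primeSaturation) ?_
    refine le_of_forall_isAssociatedPrime fun P x hP hx hxQ ↦ notMem_Q ⟨P, hP⟩ hx ?_
    exact f.apply_symm_apply ⟨P, hP⟩ ▸ (mem_iInf _).1 hxQ (f.symm ⟨P, hP⟩)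
  exact ⟨_, fun i ↦ (f i).1, fun i ↦ Q (f i), isMinPD_of_associatedPrimes (fun i ↦ hQ (f i))
    (Subtype.val_injective.comp f.injective) hN fun i ↦ (f i).2,
    fun i ↦ le_sup_left.trans le_primeSaturation⟩

section ZpowProd

variable {σ : Type*} [Fintype σ]

/-- The ideal `∏ᵢ Iᵢ ^ dᵢ` for an integer vector `d`, where `Iᵢ ^ dᵢ = R` if `dᵢ < 0`: the degree
`d` part of the extended Rees algebra of `I`. -/
def zpowProd (I : σ → Ideal R) (d : σ → ℤ) : Ideal R :=
  ∏ i, I i ^ (d i).toNat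

theorem zpowProd_natCast (I : σ → Ideal R) (n : σ → ℕ) :
    zpowProd I (fun i ↦ n i) = ∏ i, I i ^ n i := by
  simp [zpowProd]

theorem zpowProd_eq_top {I : σ → Ideal R} {d : σ → ℤ} (hd : d ≤ 0) : zpowProd I d = ⊤ := by
  simp [zpowProd, fun i ↦ Int.toNat_of_nonpos (hd i)]

theorem zpowProd_single [DecidableEq σ] (I : σ → Ideal R) (i : σ) :
    zpowProd I (Pi.single i 1) = I i := by
  rw [zpowProd, Fintype.prod_eq_single i fun j hj ↦ by simp [hj]]
  simp

theorem zpowProd_mul_le (I : σ → Ideal R) (d e : σ → ℤ) :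
    zpowProd I d * zpowProd I e ≤ zpowProd I (d + e) := by
  rw [zpowProd, zpowProd, ← Finset.prod_mul_distrib]
  refine Finset.prod_le_prod' fun i _ ↦ ?_
  rw [← pow_add, Pi.add_apply]
  exact Ideal.pow_le_pow_right (by lia)

end ZpowProd

section ExtendedRees

open AddMonoidAlgebra Pointwise TensorProduct

variable {σ : Type*}

variable (R M) in
/-- The degree `d` coefficient of a Laurent polynomial over `M`. -/
noncomputable def tensorCoeff (d : σ → ℤ) : R[σ → ℤ] ⊗[R] M →ₗ[R] M :=
  TensorProduct.lid R M ∘ₗ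
    LinearMap.rTensor M (Finsupp.lapply d ∘ₗ (coeffLinearEquiv R).toLinearMap)

theorem tensorCoeff_tmul (d : σ → ℤ) (c : R[σ → ℤ]) (x : M) :
    tensorCoeff R M d (c ⊗ₜ x) = c.coeff d • x := by
  simp [tensorCoeff]

variable [DecidableEq σ]

/-- The extended multi-Rees algebra `R[I₁T₁, …, I_tT_t, T₁⁻¹, …, T_t⁻¹]` inside the ring of Laurent
polynomials, which is encoded as `R[σ → ℤ]` with `single d 1` for the monomial `T^d`. -/
noncomputable def extendedRees (I : σ → Ideal R) : Subalgebra R R[σ → ℤ] :=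
  Algebra.adjoin R ((⋃ i, single (Pi.single i 1) '' (I i : Set R)) ∪
    Set.range fun i ↦ single (Pi.single i (-1)) 1)

/-- The element `Tᵢ⁻¹` of the extended Rees algebra. -/
noncomputable def invT (I : σ → Ideal R) (i : σ) : extendedRees I :=
  ⟨single (Pi.single i (-1)) 1, Algebra.subset_adjoin (Or.inr ⟨i, rfl⟩)⟩

variable (M) (I : σ → Ideal R)

/-- The extended multi-Rees module `⨁_d I^d M T^d`, generated by `M` inside `R[σ → ℤ] ⊗ M`. -/
noncomputable def extendedReesModule : Submodule (extendedRees I) (R[σ → ℤ] ⊗[R] M) :=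
  span _ (LinearMap.range (TensorProduct.mk R R[σ → ℤ] M 1))

instance [Module.Finite R M] : Module.Finite (extendedRees I) (extendedReesModule M I) := by
  rw [extendedReesModule, ← LinearMap.range_liftBaseChange]
  infer_instance

-- A shortcut: the search for this instance through `R[σ → ℤ] ⊗[R] M` is too expensive.
noncomputable instance : SMul (extendedRees I) (extendedReesModule M I) :=
  (extendedReesModule M I).smul

/-- The map `x ↦ 1 ⊗ x` of `M` onto the degree `0` part of the extended Rees module. -/
noncomputable def toExtendedReesModule : M →ₗ[R] extendedReesModule M I :=
  (TensorProduct.mk R R[σ → ℤ] M 1).codRestrict ((extendedReesModule M I).restrictScalars R)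
    fun x ↦ subset_span ⟨x, rfl⟩

variable {M I}

theorem isSMulRegular_invT (i : σ) : IsSMulRegular (extendedReesModule M I) (invT I i) := by
  have hunit : IsUnit (invT I i : R[σ → ℤ]) := by
    refine IsUnit.of_mul_eq_one (single (Pi.single i 1) 1) ?_
    simp [invT, single_mul_single, ← Pi.single_add, one_def]
  refine fun y z h ↦ Subtype.ext (hunit.isSMulRegular (R[σ → ℤ] ⊗[R] M) ?_)
  exact congrArg Subtype.val h

theorem fg_extendedRees [Finite σ] [IsNoetherianRing R] (I : σ → Ideal R) :
    (extendedRees I).FG := by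
  obtain ⟨s, hs⟩ : (span R ((⋃ i, single (Pi.single i 1) '' (I i : Set R)) ∪
      Set.range fun i ↦ single (Pi.single i (-1)) 1 : Set R[σ → ℤ])).FG := by
    rw [span_union, span_iUnion]
    refine (fg_iSup _ fun i ↦ ?_).sup (fg_span (Set.finite_range _))
    have := (IsNoetherian.noetherian (I i)).map (lsingle (R := R) (Pi.single i 1 : σ → ℤ))
    rwa [← span_eq (map _ _), map_coe] at this
  rw [extendedRees, ← Algebra.adjoin_span, ← hs, Algebra.adjoin_span]
  exact Subalgebra.fg_adjoin_finset s

instance [Finite σ] [IsNoetherianRing R] (I : σ → Ideal R) :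
    IsNoetherianRing (extendedRees I) :=
  have := (extendedRees I).fg_iff_finiteType.1 (fg_extendedRees I)
  Algebra.FiniteType.isNoetherianRing R _

variable [Fintype σ]

theorem coeff_mem_zpowProd {c : R[σ → ℤ]} (hc : c ∈ extendedRees I) (d : σ → ℤ) :
    c.coeff d ∈ zpowProd I d := by
  have coeff_single_mem {e : σ → ℤ} {a : R} (ha : a ∈ zpowProd I e) :
      ∀ d, (single e a).coeff d ∈ zpowProd I d := fun d ↦ by
    rw [coeff_single, Finsupp.single_apply]
    split_ifs with h
    exacts [h ▸ ha, zero_mem _]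
  induction hc using Algebra.adjoin_induction generalizing d with
  | mem c hc =>
    obtain hc | ⟨i, rfl⟩ := hc
    · obtain ⟨i, a, ha, rfl⟩ := Set.mem_iUnion.1 hc
      exact coeff_single_mem (by rwa [zpowProd_single]) d
    · refine coeff_single_mem ?_ d
      simp [zpowProd_eq_top, Pi.single_nonpos]
  | algebraMap r => exact coeff_single_mem (by simp [zpowProd_eq_top]) d
  | add b c _ _ hb hc => exact add_mem (hb d) (hc d)
  | mul b c _ _ hb hc =>
    rw [coeff_mul]
    refine sum_mem fun d₁ _ ↦ sum_mem fun d₂ _ ↦ ?_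
    dsimp only
    split_ifs with h
    exacts [h ▸ zpowProd_mul_le I d₁ d₂ (Ideal.mul_mem_mul (hb d₁) (hc d₂)), zero_mem _]

theorem coe_prod_invT_pow (n : σ → ℕ) :
    (↑(∏ i, invT I i ^ n i) : R[σ → ℤ]) = single (-fun i ↦ (n i : ℤ)) 1 := by
  simp only [invT, SubmonoidClass.coe_finsetProd, SubmonoidClass.coe_pow, single_pow, one_pow,
    prod_single, Finset.prod_const_one, ← Pi.single_smul, smul_neg, nsmul_one]
  exact congrArg (single · 1) (Finset.univ_sum_single _)

theorem map_prod_pow_le_span_prod_invT_pow (n : σ → ℕ) :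
    (∏ i, I i ^ n i).map (algebraMap R (extendedRees I)) ≤ Ideal.span {∏ i, invT I i ^ n i} := by
  have map_le (i : σ) : (I i).map (algebraMap R (extendedRees I)) ≤ Ideal.span {invT I i} := by
    refine Ideal.map_le_of_le_comap fun a ha ↦ Ideal.mem_span_singleton'.2 ?_
    refine ⟨⟨single (Pi.single i 1) a, Algebra.subset_adjoin (Or.inl ?_)⟩, Subtype.ext ?_⟩
    · exact Set.mem_iUnion.2 ⟨i, a, ha, rfl⟩
    · simp [invT, single_mul_single, ← Pi.single_add]
  calc (∏ i, I i ^ n i).map (algebraMap R (extendedRees I))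
      = ∏ i, (I i).map (algebraMap R (extendedRees I)) ^ n i := by
        simp_rw [← Ideal.mapHom_apply, map_prod, map_pow]
    _ ≤ ∏ i, Ideal.span {invT I i} ^ n i :=
        Finset.prod_le_prod' fun i _ ↦ Ideal.pow_right_mono (map_le i) (n i)
    _ = Ideal.span {∏ i, invT I i ^ n i} := by
        simp_rw [Ideal.span_singleton_pow, Ideal.prod_span_singleton]

theorem single_mul_coe_prod_invT_pow (n : σ → ℕ) :
    single (fun i ↦ (n i : ℤ)) 1 * (↑(∏ i, invT I i ^ n i) : R[σ → ℤ]) = 1 := by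
  rw [coe_prod_invT_pow, single_mul_single, add_neg_cancel, one_mul, one_def]

theorem tensorCoeff_mem_zpowProd_smul_top {z : R[σ → ℤ] ⊗[R] M} (hz : z ∈ extendedReesModule M I)
    (d : σ → ℤ) : tensorCoeff R M d z ∈ (zpowProd I d • ⊤ : Submodule R M) := by
  rw [extendedReesModule, ← LinearMap.range_liftBaseChange] at hz
  obtain ⟨z, rfl⟩ := hz
  induction z with
  | zero => simp
  | tmul c x =>
    rw [LinearMap.liftBaseChange_tmul, mk_apply, Subalgebra.smul_def, smul_tmul', smul_eq_mul,
      mul_one, tensorCoeff_tmul]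
    exact smul_mem_smul (coeff_mem_zpowProd c.2 d) mem_top
  | add y z hy hz => rw [map_add, map_add]; exact add_mem hy hz

theorem exists_prod_invT_pow_smul_eq_iff (I : σ → Ideal R) (n : σ → ℕ) (x : M) :
    (∃ z : extendedReesModule M I, (∏ i, invT I i ^ n i) • z = toExtendedReesModule M I x) ↔
      x ∈ ((∏ i, I i ^ n i) • ⊤ : Submodule R M) := by
  refine ⟨fun ⟨z, hz⟩ ↦ ?_, fun hx ↦ ?_⟩
  · have hzx : (z : R[σ → ℤ] ⊗[R] M) = single (fun i ↦ (n i : ℤ)) 1 ⊗ₜ x := by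
      replace hz : (↑(∏ i, invT I i ^ n i) : R[σ → ℤ]) • (z : R[σ → ℤ] ⊗[R] M) = 1 ⊗ₜ x :=
        congrArg Subtype.val hz
      rw [← one_smul R[σ → ℤ] (z : R[σ → ℤ] ⊗[R] M),
        ← single_mul_coe_prod_invT_pow (I := I) n, mul_smul, hz, smul_tmul', smul_eq_mul, mul_one]
    have hcoeff := tensorCoeff_mem_zpowProd_smul_top z.2 fun i ↦ n i
    rw [hzx, tensorCoeff_tmul, zpowProd_natCast] at hcoeff
    simpa using hcoeff
  · induction hx using smul_induction_on' with
    | smul r hr x _ =>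
      obtain ⟨c, hc⟩ := Ideal.mem_span_singleton'.1
        (map_prod_pow_le_span_prod_invT_pow n (Ideal.mem_map_of_mem _ hr))
      refine ⟨c • toExtendedReesModule M I x, ?_⟩
      rw [smul_smul, mul_comm, hc, map_smul, algebraMap_smul]
    | add x _ y _ hx hy =>
      obtain ⟨y, hy⟩ := hy
      obtain ⟨x, hx⟩ := hx
      exact ⟨x + y, by rw [smul_add, hx, hy, map_add]⟩

end ExtendedRees

section Contraction

open Pointwise

variable {S X : Type*} [CommRing S] [Algebra R S] [AddCommGroup X] [Module R X] [Module S X]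
  [IsScalarTower R S X] {N : Submodule R M} {v : S} {f : M →ₗ[R] X}

theorem associatedPrimes_subset_quotSMulTop (hN : ∀ x, (∃ z, v • z = f x) ↔ x ∈ N) :
    N.associatedPrimes ⊆ associatedPrimes R (QuotSMulTop v X) := by
  rw [← associatedPrimes_quotient]
  let g : M →ₗ[R] QuotSMulTop v X := ((v • ⊤ : Submodule S X).mkQ.restrictScalars R) ∘ₗ f
  have hker : LinearMap.ker g = N := by
    ext x
    simp [g, ← hN, mem_smul_pointwise_iff_exists]
  refine associatedPrimes.subset_of_injective (f := N.liftQ g hker.ge) ?_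
  rw [← LinearMap.ker_eq_bot, ker_liftQ_eq_bot _ _ _ hker.le]

theorem pow_smul_top_inf_colonSubmodule_le_of_map (hN : ∀ x, (∃ z, v • z = f x) ↔ x ∈ N)
    {J : Ideal R} {m : ℕ}
    (hv : J.map (algebraMap R S) ^ m • ⊤ ⊓ colonSubmodule (v • ⊤) (J.map (algebraMap R S)) ≤
      (v • ⊤ : Submodule S X)) :
    J ^ m • ⊤ ⊓ colonSubmodule N J ≤ N := by
  replace hN (x : M) : x ∈ N ↔ f x ∈ (v • ⊤ : Submodule S X) := by
    simp [← hN, mem_smul_pointwise_iff_exists]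
  rintro x ⟨hxJ, hx⟩
  have hfxJ : f x ∈ ((J ^ m).map (algebraMap R S) • ⊤ : Submodule S X).restrictScalars R := by
    rw [Ideal.smul_restrictScalars]
    exact Submodule.smul_top_le_comap_smul_top _ f hxJ
  have hJ : J.map (algebraMap R S) ≤ (v • ⊤ : Submodule S X).colon {f x} := by
    refine Ideal.map_le_of_le_comap fun r hr ↦ mem_colon_singleton.2 ?_
    rw [algebraMap_smul, ← map_smul, ← hN]
    exact mem_colonSubmodule.1 hx r hr
  rw [Ideal.map_pow] at hfxJ
  exact (hN x).2 (hv ⟨hfxJ, mem_colonSubmodule.2 fun c hc ↦ mem_colon_singleton.1 (hJ hc)⟩)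

end Contraction

section PowersOfIdeals

variable {σ : Type*} [Fintype σ]

theorem exists_multiset_forall_prod_map_eq (n : σ → ℕ) :
    ∃ s : Multiset σ, s.card = ∑ i, n i ∧
      ∀ {S : Type*} [CommMonoid S] (u : σ → S), (s.map u).prod = ∏ i, u i ^ n i := by
  refine ⟨∑ i, Multiset.replicate (n i) i, by simp, fun u ↦ ?_⟩
  rw [← Multiset.coe_mapAddMonoidHom, map_sum, Multiset.prod_sum]
  simp

variable [IsNoetherianRing R] (M) [Module.Finite R M] (I : σ → Ideal R)

theorem finite_iUnion_associatedPrimes_prod_pow_smul_top :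
    (⋃ n : σ → ℕ, ((∏ i, I i ^ n i) • ⊤ : Submodule R M).associatedPrimes).Finite := by
  classical
  refine (Set.finite_iUnion fun i ↦ finite_associatedPrimes_of_algebra R (extendedRees I)
    (X := QuotSMulTop (invT I i) (extendedReesModule M I))).subset (Set.iUnion_subset fun n ↦ ?_)
  obtain ⟨s, -, hs⟩ := exists_multiset_forall_prod_map_eq n
  refine (associatedPrimes_subset_quotSMulTop (S := extendedRees I) (X := extendedReesModule M I)
    (exists_prod_invT_pow_smul_eq_iff I n)).trans ?_
  rw [← hs]
  exact associatedPrimes_quotSMulTop_multiset_prod_subset isSMulRegular_invT s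

theorem exists_pow_smul_top_inf_colonSubmodule_prod_pow_smul_top_le (P : Ideal R) :
    ∃ k : ℕ, ∀ n : σ → ℕ,
      (P ^ (k * ∑ i, n i) • ⊤ ⊓ colonSubmodule ((∏ i, I i ^ n i) • ⊤) P : Submodule R M) ≤
        (∏ i, I i ^ n i) • ⊤ := by
  classical
  obtain ⟨k, hk⟩ := exists_pow_smul_top_inf_colonSubmodule_multiset_prod_le
    (M := extendedReesModule M I) isSMulRegular_invT (P.map (algebraMap R (extendedRees I)))
  refine ⟨k, fun n ↦ ?_⟩
  obtain ⟨s, hcard, hs⟩ := exists_multiset_forall_prod_map_eq n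
  refine pow_smul_top_inf_colonSubmodule_le_of_map (S := extendedRees I)
    (X := extendedReesModule M I) (exists_prod_invT_pow_smul_eq_iff I n) ?_
  rw [← hs, ← hcard]
  exact hk s

end PowersOfIdeals

/-- Linear Growth (Corollary 3.4): there is `k` such that for each `n` there is an
irredundant minimal primary decomposition of `I₁^{n₁}⋯I_t^{n_t}M` each of whose
`Pᵢ`-primary components contains `Pᵢ^{k|n|}M`. -/
theorem linear_growth [IsNoetherianRing R] [Module.Finite R M]
    (t : ℕ) (I : Fin t → Ideal R) :
    ∃ k : ℕ, ∀ n : Fin t → ℕ,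
      ∃ (r : ℕ) (P : Fin r → Ideal R) (Q : Fin r → Submodule R M),
        IsMinPD ((∏ i, I i ^ n i) • ⊤ : Submodule R M) P Q ∧
        ∀ i, (P i ^ (k * ∑ j, n j) • ⊤ : Submodule R M) ≤ Q i := by
  have hfin := finite_iUnion_associatedPrimes_prod_pow_smul_top M I
  choose k hk using exists_pow_smul_top_inf_colonSubmodule_prod_pow_smul_top_le M I
  let K := hfin.toFinset.sup k
  refine ⟨K, fun n ↦ exists_isMinPD_of_pow_smul_top_inf_colonSubmodule_le _
    (fun _ ↦ K * ∑ j, n j) fun P hP ↦ ?_⟩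
  have hkP : k P ≤ K := Finset.le_sup (hfin.mem_toFinset.2 (Set.mem_iUnion.2 ⟨n, hP⟩))
  have hpow : P ^ (K * ∑ j, n j) ≤ P ^ (k P * ∑ j, n j) :=
    Ideal.pow_le_pow_right (Nat.mul_le_mul_right _ hkP)
  exact (inf_le_inf_right _ (smul_mono_left hpow)).trans (hk P n)
end

section
/- Let R be a Noetherian ring, M a finitely generated R-module, N ⊊ M, and P ∈ Ass(M/N). Suppose W is a submodule with N = W ∩ (N :_M P^∞) and Ass(M/W) contains P. Let W = Q₁ ∩ ... ∩ Q_r be an irredundant minimal primary decomposition with Q₁ being P-primary. Then Q₁ is a P-primary component of N in M, i.e., Q₁ occurs in some irredundant minimal primary decomposition of N in M. -/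
open Submodule

variable {R M : Type*} [CommRing R] [AddCommGroup M] [Module R M]

/-!
Write `W = Q ⊓ W'`, where `Q` is the `P`-primary component and `W'` is the intersection of the
others. As `P` is finitely generated, saturating a second time adds nothing, so `P` is not
associated to `(N :_M P^∞)`; nor is it associated to `W'`, hence not to `L = W' ⊓ (N :_M P^∞)`.
Adjoining `Q` to a minimal primary decomposition of `L` therefore gives a primary decomposition of
`N = Q ⊓ L` with distinct primes. Refining it to an irredundant one cannot drop `Q`, the only
component that can account for `P ∈ Ass(M/N)`.
-/

section AssociatedPrimes

theorem colon_bot_mkQ_singleton (N : Submodule R M) (x : M) :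
    (⊥ : Submodule R (M ⧸ N)).colon {N.mkQ x} = N.colon {x} := by
  ext r
  rw [mem_colon_singleton, mem_colon_singleton, mem_bot, ← map_smul, mkQ_apply,
    Quotient.mk_eq_zero]

theorem associatedPrimes_inf_subset (A B : Submodule R M) :
    (A ⊓ B).associatedPrimes ⊆ A.associatedPrimes ∪ B.associatedPrimes := by
  rintro p ⟨hp, x, hx⟩
  rw [inf_colon, Ideal.radical_inf] at hx
  rcases hp.inf_le.mp hx.ge with hA | hB
  · exact Or.inl ⟨hp, x, le_antisymm (hx.le.trans inf_le_left) hA⟩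
  · exact Or.inr ⟨hp, x, le_antisymm (hx.le.trans inf_le_right) hB⟩

theorem associatedPrimes_top_s13 : (⊤ : Submodule R M).associatedPrimes = ∅ := by
  refine Set.eq_empty_of_forall_notMem ?_
  rintro p ⟨hp, x, hx⟩
  exact hp.ne_top (by rw [hx, top_colon, Ideal.radical_top])

theorem exists_mem_associatedPrimes_of_finset_inf {ι : Type*} {s : Finset ι}
    {f : ι → Submodule R M} {p : Ideal R} (hp : p ∈ (s.inf f).associatedPrimes) :
    ∃ i ∈ s, p ∈ (f i).associatedPrimes := by
  classical
  induction s using Finset.induction_on with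
  | empty => simp [associatedPrimes_top_s13] at hp
  | insert i s _ ih =>
    rw [Finset.inf_insert] at hp
    rcases associatedPrimes_inf_subset _ _ hp with hi | hs
    · exact ⟨i, Finset.mem_insert_self i s, hi⟩
    · obtain ⟨j, hj, hpj⟩ := ih hs
      exact ⟨j, Finset.mem_insert_of_mem hj, hpj⟩

theorem associatedPrimes_eq_singleton_of_isPrimary {Q : Submodule R M} (hQ : Q.IsPrimary) :
    Q.associatedPrimes = {(Q.colon Set.univ).radical} := by
  have hdecomp : Q.IsMinimalPrimaryDecomposition {Q} :=
    ⟨by simp, by simpa using hQ, by simp, by simpa using hQ.ne_top⟩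
  simp [← hdecomp.image_radical_eq_associated_primes]

end AssociatedPrimes

section Saturation

variable {J K : Ideal R} {N : Submodule R M} {x : M}

theorem mem_sat : x ∈ sat J N ↔ ∃ n, J ^ n ≤ N.colon {x} := by
  have hmono : Monotone fun n : ℕ ↦ ⨅ r ∈ J ^ n, N.comap (LinearMap.lsmul R M r) :=
    fun m n hmn ↦ biInf_mono fun r hr ↦ Ideal.pow_le_pow_right hmn hr
  rw [sat, mem_iSup_of_directed _ hmono.directed_le]
  simp [SetLike.le_def]

theorem exists_pow_mul_le_colon_of_le_colon_sat (hK : K.FG) (hKx : K ≤ (sat J N).colon {x}) :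
    ∃ n, J ^ n * K ≤ N.colon {x} := by
  induction K, hK using fg_induction with
  | singleton r =>
    obtain ⟨n, hn⟩ := mem_sat.mp (mem_colon_singleton.mp (hKx (mem_span_singleton_self r)))
    refine ⟨n, Ideal.mul_le.mpr fun a ha b hb ↦ ?_⟩
    obtain ⟨c, rfl⟩ := mem_span_singleton.mp hb
    have har : a • r • x ∈ N := mem_colon_singleton.mp (hn ha)
    rw [mem_colon_singleton, smul_eq_mul, mul_left_comm, mul_smul, mul_smul]
    exact N.smul_mem c har
  | sup K₁ K₂ _ _ ih₁ ih₂ =>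
    obtain ⟨m, hm⟩ := ih₁ (le_sup_left.trans hKx)
    obtain ⟨n, hn⟩ := ih₂ (le_sup_right.trans hKx)
    refine ⟨max m n, ?_⟩
    rw [Ideal.mul_sup]
    exact sup_le ((Ideal.mul_mono_left (Ideal.pow_le_pow_right (le_max_left m n))).trans hm)
      ((Ideal.mul_mono_left (Ideal.pow_le_pow_right (le_max_right m n))).trans hn)

theorem notMem_associatedPrimes_sat (hJ : J.FG) : J ∉ (sat J N).associatedPrimes := by
  rintro ⟨hprime, x, hx⟩
  obtain ⟨k, hk⟩ := Ideal.exists_pow_le_of_le_radical_of_fg hx.le hJ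
  obtain ⟨n, hn⟩ := exists_pow_mul_le_colon_of_le_colon_sat hJ.pow hk
  have hxsat : x ∈ sat J N := mem_sat.mpr ⟨n + k, by rwa [pow_add]⟩
  have hcolon : (sat J N).colon {x} = ⊤ :=
    (colon_eq_top_iff_subset {x}).mpr (Set.singleton_subset_iff.mpr hxsat)
  exact hprime.ne_top (by rw [hx, hcolon, Ideal.radical_top])

end Saturation

section PrimaryComponent

variable {N W S Q L : Submodule R M} {P : Ideal R}

theorem isPrimaryComponent_of_irredundant {t : Finset (Submodule R M)}
    (hprimary : ∀ A ∈ t, ∃ p, A.associatedPrimes = {p})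
    (hinj : Set.InjOn Submodule.associatedPrimes (t : Set (Submodule R M)))
    (hinf : t.inf id = N) (hirr : ∀ A ∈ t, ¬ (t.erase A).inf id ≤ A)
    (hQt : Q ∈ t) (hQ : Q.associatedPrimes = {P}) : IsPrimaryComponent N P Q := by
  choose! p hp using hprimary
  let e := t.equivFin
  have hQ' (i) : (e.symm i : Submodule R M).associatedPrimes = {p (e.symm i)} :=
    hp _ (e.symm i).2
  refine ⟨t.card, fun i ↦ p (e.symm i), fun i ↦ e.symm i, e ⟨Q, hQt⟩,
    ⟨fun i ↦ ?_, fun i j hij ↦ ?_, ?_, fun i hN ↦ ?_⟩, ?_, by simp⟩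
  · rw [associatedPrimes_quotient, hQ']
  · refine e.symm.injective (Subtype.ext (hinj (e.symm i).2 (e.symm j).2 ?_))
    rw [hQ', hQ']
    exact congrArg _ hij
  · rw [← hinf, Finset.inf_eq_iInf, iInf_subtype', ← e.symm.iInf_comp]
    rfl
  · refine hirr _ (e.symm i).2 (le_trans ?_ (hinf.ge.trans (Finset.inf_le (e.symm i).2)))
    rw [hN]
    refine le_iInf₂ fun j hj ↦ Finset.inf_le (f := id) (Finset.mem_erase.mpr ⟨?_, (e.symm j).2⟩)
    exact fun h ↦ hj (e.symm.injective (Subtype.ext h))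
  · simpa [hQ] using (hp Q hQt).symm

theorem isPrimaryComponent_of_mem_associatedPrimes {t : Finset (Submodule R M)}
    (hprimary : ∀ A ∈ t, ∃ p, A.associatedPrimes = {p})
    (hinj : Set.InjOn Submodule.associatedPrimes (t : Set (Submodule R M)))
    (hinf : t.inf id = N) (hQt : Q ∈ t) (hQ : Q.associatedPrimes = {P})
    (hP : P ∈ N.associatedPrimes) : IsPrimaryComponent N P Q := by
  obtain ⟨u, hut, huN, hirr⟩ := decomposition_erase_inf hinf
  obtain ⟨A, hAu, hPA⟩ := exists_mem_associatedPrimes_of_finset_inf (huN ▸ hP)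
  have hAQ : A = Q := by
    obtain ⟨p, hA⟩ := hprimary A (hut hAu)
    obtain rfl : P = p := by simpa [hA] using hPA
    exact hinj (hut hAu) hQt (hA.trans hQ.symm)
  exact isPrimaryComponent_of_irredundant (fun B hB ↦ hprimary B (hut hB))
    (hinj.mono (Finset.coe_subset.mpr hut)) huN hirr (hAQ ▸ hAu) hQ

theorem isPrimaryComponent_inf_left (hM : IsLasker R M) (hQ : Q.associatedPrimes = {P})
    (hL : P ∉ L.associatedPrimes) (hP : P ∈ (Q ⊓ L).associatedPrimes) :
    IsPrimaryComponent (Q ⊓ L) P Q := by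
  classical
  obtain ⟨t, ht⟩ := hM.exists_isMinimalPrimaryDecomposition L
  have hprimary (A) (hA : A ∈ t) : A.associatedPrimes = {(A.colon Set.univ).radical} :=
    associatedPrimes_eq_singleton_of_isPrimary (ht.primary hA)
  have hne (A) (hA : A ∈ t) : A.associatedPrimes ≠ {P} := by
    rw [hprimary A hA, Ne, Set.singleton_eq_singleton_iff]
    rintro rfl
    exact hL (ht.mem_associatedPrimes hA)
  have hinj : Set.InjOn Submodule.associatedPrimes (t : Set (Submodule R M)) := by
    intro A hA B hB hAB
    rw [hprimary A hA, hprimary B hB, Set.singleton_eq_singleton_iff] at hAB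
    exact ht.injOn _ _ hA hB hAB
  have hQt : Q ∉ t := fun h ↦ hne Q h hQ
  refine isPrimaryComponent_of_mem_associatedPrimes (t := insert Q t) ?_ ?_ ?_
    (Finset.mem_insert_self Q t) hQ hP
  · exact (Finset.forall_mem_insert _ _ _).mpr ⟨⟨P, hQ⟩, fun A hA ↦ ⟨_, hprimary A hA⟩⟩
  · rw [Finset.coe_insert, Set.injOn_insert (by simpa using hQt), hQ]
    exact ⟨hinj, fun ⟨A, hA, hAP⟩ ↦ hne A hA hAP⟩
  · rw [Finset.inf_insert, ht.inf_eq, id]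

theorem primary_component_of_inter_general (hM : IsLasker R M) (hN : N = W ⊓ S)
    (hP : P ∈ associatedPrimes R (M ⧸ N)) (hS : P ∉ associatedPrimes R (M ⧸ S))
    (hQ : IsPrimaryComponent W P Q) : IsPrimaryComponent N P Q := by
  classical
  obtain ⟨r, p, q, i, ⟨hprimary, hinj, hW, -⟩, rfl, rfl⟩ := hQ
  simp only [associatedPrimes_quotient] at hprimary hP hS
  let W' := (Finset.univ.erase i).inf q
  have hWq : W = q i ⊓ W' := by
    rw [hW, ← Finset.inf_insert, Finset.insert_erase (Finset.mem_univ i),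
      Finset.inf_univ_eq_iInf]
  have hW' : p i ∉ W'.associatedPrimes := by
    intro h
    obtain ⟨j, hj, hij⟩ := exists_mem_associatedPrimes_of_finset_inf h
    rw [hprimary j, Set.mem_singleton_iff] at hij
    exact Finset.ne_of_mem_erase hj (hinj hij.symm)
  have hL : p i ∉ (W' ⊓ S).associatedPrimes := fun h ↦
    (associatedPrimes_inf_subset W' S h).elim hW' hS
  obtain rfl : N = q i ⊓ (W' ⊓ S) := by rw [hN, hWq, inf_assoc]
  exact isPrimaryComponent_inf_left hM (hprimary i) hL hP

end PrimaryComponent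

/-- Key step in Corollary 3.4: if `N = W ⊓ (N :_M P^∞)`, `P ∈ Ass(M/W)`, and
`W = Q₁ ∩ ⋯ ∩ Q_r` is an irredundant minimal primary decomposition with `Q_{i₀}`
being `P`-primary, then `Q_{i₀}` is a `P`-primary component of `N` in `M`. -/
theorem primary_component_of_inter [IsNoetherianRing R] [Module.Finite R M]
    (N : Submodule R M) (hN : N ≠ ⊤) (P : Ideal R)
    (hP : P ∈ associatedPrimes R (M ⧸ N))
    (W : Submodule R M) (hW : N = W ⊓ sat P N)
    (hPW : P ∈ associatedPrimes R (M ⧸ W))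
    (r : ℕ) (Pf : Fin r → Ideal R) (Qf : Fin r → Submodule R M)
    (hPD : IsMinPD W Pf Qf) (i₀ : Fin r) (hi₀ : Pf i₀ = P) :
    IsPrimaryComponent N P (Qf i₀) := by
  have hS : P ∉ associatedPrimes R (M ⧸ sat P N) := by
    rw [associatedPrimes_quotient]
    exact notMem_associatedPrimes_sat (IsNoetherian.noetherian P)
  exact primary_component_of_inter_general (isLasker R M) hW hP hS ⟨r, Pf, Qf, i₀, hPD, hi₀, rfl⟩
end

section
/- Let R be a Noetherian ring, M a finitely generated faithful... (drop faithful) — Let R be Noetherian, M finitely generated, I an ideal, and suppose the filtration {I^{n*}M} satisfies I^{(n+1)*} M = I · I^{n*} M for all sufficiently large n, where {F_n} is any descending multiplicative filtration of submodules of M with I F_n ⊆ F_{n+1} ⊆ F_n. More precisely: if {F_n}_{n≥0} is a descending chain of submodules of M with I F_n ⊆ F_{n+1} for all n and F_{n+1} = I F_n for all n ≫ 0, then Ass(M/F_n) is the same set for all sufficiently large n. -/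
open Submodule

variable {R M : Type*} [CommRing R] [AddCommGroup M] [Module R M]

/-! For `F` stable, the graded module `⨁ F n / F (n + 1)` is finite over the Rees algebra of `I`, so
only finitely many primes of `R` are associated to its pieces. By Artin–Rees, for large `n` an
element of `F n` that `I` multiplies into `F (n + 2)` lies in `F (n + 1)`; hence finitely many
generators of `I` embed `F n / F (n + 1)` into a power of `F (n + 1) / F (n + 2)`, and
`Ass (F n / F (n + 1))` is eventually increasing, so eventually constant. The exact sequence
`0 → F n / F (n + 1) → M / F (n + 1) → M / F n → 0` then makes `Ass (M / F n)` eventually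
decreasing, inside a finite set. -/

section EventuallyConst

open Filter

theorem eventuallyConst_of_eventually_le_succ {α : Type*} [PartialOrder α] {f : ℕ → α}
    (hf : ∀ᶠ n in atTop, f n ≤ f (n + 1)) (hfin : (Set.range f).Finite) :
    EventuallyConst f atTop := by
  obtain ⟨k, hk⟩ := eventually_atTop.1 hf
  have : Finite (Set.range f) := hfin
  let g : ℕ →o Set.range f :=
    ⟨fun n => ⟨f (k + n), Set.mem_range_self _⟩,
      monotone_nat_of_le_succ fun n => hk (k + n) (by lia)⟩
  obtain ⟨l, hl⟩ := WellFoundedGT.monotone_chain_condition g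
  refine eventuallyConst_atTop.2 ⟨k + l, fun n hn => ?_⟩
  obtain ⟨m, rfl⟩ := Nat.exists_eq_add_of_le hn
  have hm : f (k + l) = f (k + (l + m)) := congrArg Subtype.val (hl (l + m) (by lia))
  rw [add_assoc, hm]

theorem eventuallyConst_of_eventually_succ_le {α : Type*} [PartialOrder α] {f : ℕ → α}
    (hf : ∀ᶠ n in atTop, f (n + 1) ≤ f n) (hfin : (Set.range f).Finite) :
    EventuallyConst f atTop :=
  eventuallyConst_of_eventually_le_succ (α := αᵒᵈ) hf hfin

end EventuallyConst

section AssociatedPrimes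

theorem associatedPrimes_quotient_subset_of_ker_eq {E : Type*} [AddCommGroup E] [Module R E]
    {N : Submodule R M} (f : M →ₗ[R] E) (hf : LinearMap.ker f = N) :
    associatedPrimes R (M ⧸ N) ⊆ associatedPrimes R E :=
  associatedPrimes.subset_of_injective (LinearMap.ker_eq_bot.1 (ker_liftQ_eq_bot' N f hf.symm))

theorem associatedPrimes_subquotient_subset (N L : Submodule R M) :
    associatedPrimes R (L ⧸ N.submoduleOf L) ⊆ associatedPrimes R (M ⧸ N) :=
  associatedPrimes_quotient_subset_of_ker_eq (N.mkQ ∘ₗ L.subtype) <| by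
    rw [LinearMap.ker_comp, ker_mkQ, submoduleOf]

theorem associatedPrimes_quotient_subset_union {N L : Submodule R M} (h : N ≤ L) :
    associatedPrimes R (M ⧸ N) ⊆
      associatedPrimes R (L ⧸ N.submoduleOf L) ∪ associatedPrimes R (M ⧸ L) := by
  have hker : LinearMap.ker (N.mkQ ∘ₗ L.subtype) = N.submoduleOf L := by
    rw [LinearMap.ker_comp, ker_mkQ, submoduleOf]
  refine associatedPrimes.subset_union_of_exact (f := (N.submoduleOf L).liftQ _ hker.ge)
    (g := factor h) (LinearMap.ker_eq_bot.1 (ker_liftQ_eq_bot' _ _ hker.symm))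
    (LinearMap.exact_iff.2 ?_)
  rw [range_liftQ, LinearMap.range_comp, range_subtype, ker_mapQ, comap_id]

theorem associatedPrimes_pi_subset {ι : Type*} [Finite ι] (E : ι → Type*)
    [∀ i, AddCommGroup (E i)] [∀ i, Module R (E i)] :
    associatedPrimes R (∀ i, E i) ⊆ ⋃ i, associatedPrimes R (E i) := by
  rintro P ⟨hP, x, hx⟩
  have := Fintype.ofFinite ι
  have hinf : colon ⊥ {x} = Finset.univ.inf fun i => colon (⊥ : Submodule R (E i)) {x i} := by
    ext r
    simp only [mem_colon_singleton, mem_bot, funext_iff, Pi.smul_apply, Pi.zero_apply,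
      mem_finsetInf, Finset.mem_univ, true_imp_iff]
  obtain ⟨i, -, hi⟩ := hP.inf_le'.1 (hinf.symm.trans_le (Ideal.le_radical.trans_eq hx.symm))
  refine Set.mem_iUnion.2 ⟨i, hP, x i, le_antisymm ?_ (hP.radical_le_iff.2 hi)⟩
  rw [hx, hinf]
  exact Ideal.radical_mono (Finset.inf_le (Finset.mem_univ i))

theorem associatedPrimes_subset_image_comap_s15 (R A E : Type*) [CommRing R] [CommRing A]
    [IsNoetherianRing A] [Algebra R A] [AddCommGroup E] [Module R E] [Module A E]
    [IsScalarTower R A E] :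
    associatedPrimes R E ⊆ Ideal.comap (algebraMap R A) '' associatedPrimes A E := by
  rintro P ⟨hP, x, hx⟩
  have hcomap : (colon (⊥ : Submodule A E) {x}).comap (algebraMap R A) =
      colon (⊥ : Submodule R E) {x} := by
    ext r
    simp only [Ideal.mem_comap, mem_colon_singleton, algebraMap_smul, mem_bot]
  have hPmin : P ∈ ((colon (⊥ : Submodule A E) {x}).comap (algebraMap R A)).minimalPrimes := by
    rw [hcomap, ← Ideal.radical_minimalPrimes, ← hx, Ideal.minimalPrimes_eq_subsingleton_self,
      Set.mem_singleton_iff]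
  obtain ⟨q, hq, rfl⟩ := Ideal.exists_minimalPrimes_comap_eq (algebraMap R A) P hPmin
  exact ⟨q, isAssociatedPrime_iff.2 ⟨hq.1.1, exists_eq_colon_of_mem_minimalPrimes hq⟩, rfl⟩

theorem associatedPrimes_finite_of_isScalarTower (R A E : Type*) [CommRing R] [CommRing A]
    [IsNoetherianRing A] [Algebra R A] [AddCommGroup E] [Module R E] [Module A E]
    [IsScalarTower R A E] [Module.Finite A E] : (associatedPrimes R E).Finite :=
  ((associatedPrimes.finite A E).image _).subset (associatedPrimes_subset_image_comap_s15 R A E)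

end AssociatedPrimes

section ColonIdeal

/-- The submodule `(N :_M I)` of the elements of `M` that `I` multiplies into `N`. Mathlib's
`Submodule.colon` is the other residual, an ideal of `R`. -/
def colonIdeal (N : Submodule R M) (I : Ideal R) : Submodule R M :=
  ⨅ a ∈ I, N.comap (LinearMap.lsmul R M a)

theorem mem_colonIdeal {N : Submodule R M} {I : Ideal R} {x : M} :
    x ∈ colonIdeal N I ↔ ∀ a ∈ I, a • x ∈ N := by
  simp only [colonIdeal, mem_iInf, mem_comap, LinearMap.lsmul_apply]

theorem mem_colonIdeal_span {N : Submodule R M} {s : Set R} {x : M} :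
    x ∈ colonIdeal N (Ideal.span s) ↔ ∀ a ∈ s, a • x ∈ N :=
  mem_colonIdeal.trans (span_le (p := N.comap (LinearMap.toSpanSingleton R M x)))

theorem smul_le_iff_le_colonIdeal {I : Ideal R} {N L : Submodule R M} :
    I • L ≤ N ↔ L ≤ colonIdeal N I :=
  ⟨fun h _ hx => mem_colonIdeal.2 fun _ ha => h (smul_mem_smul ha hx),
    fun h => smul_le.2 fun a ha _ hx => mem_colonIdeal.1 (h hx) a ha⟩

theorem associatedPrimes_subquotient_subset_of_inf_colonIdeal_eq {I : Ideal R} (hI : I.FG)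
    {L L' N N' : Submodule R M} (hL : I • L ≤ L') (hN : L ⊓ colonIdeal N' I = N) :
    associatedPrimes R (L ⧸ N.submoduleOf L) ⊆ associatedPrimes R (L' ⧸ N'.submoduleOf L') := by
  obtain ⟨t, rfl⟩ := hI
  let mulBy (a : t) : L →ₗ[R] L' := (LinearMap.lsmul R M a).restrict fun _ hx =>
    hL (smul_mem_smul (subset_span a.2) hx)
  let f : L →ₗ[R] t → L' ⧸ N'.submoduleOf L' :=
    LinearMap.pi fun a => (N'.submoduleOf L').mkQ ∘ₗ mulBy a
  have hf : LinearMap.ker f = N.submoduleOf L := by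
    ext x
    have hx : (x : M) ∈ N ↔ ∀ a ∈ t, a • (x : M) ∈ N' := by
      rw [← hN, mem_inf, and_iff_right x.2]
      exact mem_colonIdeal_span
    simp only [f, LinearMap.mem_ker, funext_iff, LinearMap.pi_apply, LinearMap.comp_apply,
      Pi.zero_apply, mkQ_apply, Quotient.mk_eq_zero, Subtype.forall]
    exact hx.symm
  exact (associatedPrimes_quotient_subset_of_ker_eq f hf).trans <|
    (associatedPrimes_pi_subset _).trans (Set.iUnion_subset fun _ => subset_rfl)

end ColonIdeal

section Filtration

open Filter

variable {I : Ideal R} (F : I.Filtration M)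

/-- The `I`-filtration `n ↦ (F (n + k) :_M I)`. -/
def colonFiltration (k : ℕ) : I.Filtration M where
  N n := colonIdeal (F.N (n + k)) I
  mono n _ hx := mem_colonIdeal.2 fun a ha =>
    F.antitone (by lia) (mem_colonIdeal.1 hx a ha)
  smul_le n := smul_le.2 fun r hr x hx => mem_colonIdeal.2 fun a ha => by
    rw [Nat.add_right_comm]
    exact F.smul_le _ (smul_mem_smul ha (mem_colonIdeal.1 hx r hr))

/-- The filtration `n ↦ F (n + 1)`. -/
def shiftFiltration : I.Filtration M where
  N n := F.N (n + 1)
  mono n := F.mono (n + 1)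
  smul_le n := F.smul_le (n + 1)

/-- The piece `F n / F (n + 1)` of degree `n` of the graded module of a filtration. -/
abbrev GradedPiece (n : ℕ) : Type _ := F.N n ⧸ (F.N (n + 1)).submoduleOf (F.N n)

/-- The graded module `⨁ₙ F n / F (n + 1)`, as a module over the Rees algebra of `I`: the image of
the Rees module `⨁ₙ F n` in the quotient of `M[X]` by `⨁ₙ F (n + 1)`. -/
noncomputable abbrev associatedGraded :
    Submodule (reesAlgebra I) (PolynomialModule R M ⧸ (shiftFiltration F).submodule) :=
  F.submodule.map (shiftFiltration F).submodule.mkQ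

theorem single_mem_submodule_iff {n : ℕ} {x : M} :
    PolynomialModule.single R n x ∈ F.submodule ↔ x ∈ F.N n := by
  simp only [Ideal.Filtration.mem_submodule, PolynomialModule.coeff_single, Finsupp.single_apply]
  refine ⟨fun h => by simpa only [if_true] using h n, fun h i => ?_⟩
  split_ifs with hi
  · exact hi ▸ h
  · exact zero_mem _

theorem associatedPrimes_gradedPiece_subset (n : ℕ) :
    associatedPrimes R (GradedPiece F n) ⊆ associatedPrimes R (associatedGraded F) := by
  let f : F.N n →ₗ[R] associatedGraded F :=
    ((shiftFiltration F).submodule.mkQ.restrictScalars R ∘ₗ PolynomialModule.lsingle R n ∘ₗ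
      (F.N n).subtype).codRestrict ((associatedGraded F).restrictScalars R) fun x =>
        mem_map_of_mem ((single_mem_submodule_iff F).2 x.2)
  refine associatedPrimes_quotient_subset_of_ker_eq f ?_
  ext x
  exact Subtype.ext_iff.trans <|
    (Quotient.mk_eq_zero _).trans (single_mem_submodule_iff (shiftFiltration F))

variable [IsNoetherianRing R] [Module.Finite R M] {F} (hF : F.Stable)
include hF

theorem finite_iUnion_associatedPrimes_gradedPiece :
    (⋃ n, associatedPrimes R (GradedPiece F n)).Finite := by
  have hfg : F.submodule.FG := (F.submodule_fg_iff_stable fun _ => IsNoetherian.noetherian _).2 hF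
  have : Module.Finite (reesAlgebra I) (associatedGraded F) := Module.Finite.iff_fg.2 (hfg.map _)
  exact (associatedPrimes_finite_of_isScalarTower R (reesAlgebra I) (associatedGraded F)).subset
    (Set.iUnion_subset (associatedPrimes_gradedPiece_subset F))

theorem eventually_inf_colonIdeal_eq :
    ∀ᶠ n in atTop, F.N n ⊓ colonIdeal (F.N (n + 2)) I = F.N (n + 1) := by
  obtain ⟨k, hk⟩ := Ideal.Filtration.Stable.inter_right (colonFiltration F 2) hF
  filter_upwards [eventually_ge_atTop (k + 1)] with n hn
  obtain ⟨m, rfl⟩ : ∃ m, n = m + 1 := ⟨n - 1, by lia⟩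
  refine le_antisymm ?_ (le_inf (F.mono _) (smul_le_iff_le_colonIdeal.1 (F.smul_le _)))
  calc F.N (m + 1) ⊓ colonIdeal (F.N (m + 1 + 2)) I
      = I • (F.N m ⊓ colonIdeal (F.N (m + 2)) I) := (hk m (by lia)).symm
    _ ≤ F.N (m + 2) := smul_le_iff_le_colonIdeal.2 inf_le_right

theorem eventuallyConst_associatedPrimes_gradedPiece :
    EventuallyConst (fun n => associatedPrimes R (GradedPiece F n)) atTop := by
  refine eventuallyConst_of_eventually_le_succ ?_ ?_
  · filter_upwards [eventually_inf_colonIdeal_eq hF] with n hn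
    exact associatedPrimes_subquotient_subset_of_inf_colonIdeal_eq
      (IsNoetherian.noetherian I) (F.smul_le n) hn
  · exact (finite_iUnion_associatedPrimes_gradedPiece hF).finite_subsets.subset
      (Set.range_subset_iff.2 (Set.subset_iUnion _))

theorem finite_iUnion_associatedPrimes_quotient :
    (⋃ n, associatedPrimes R (M ⧸ F.N n)).Finite := by
  refine ((finite_iUnion_associatedPrimes_gradedPiece hF).union
    (associatedPrimes.finite R (M ⧸ F.N 0))).subset (Set.iUnion_subset fun n => ?_)
  induction n with
  | zero => exact Set.subset_union_right
  | succ n ih =>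
    exact (associatedPrimes_quotient_subset_union (F.mono n)).trans <| Set.union_subset
      ((Set.subset_iUnion (fun n => associatedPrimes R (GradedPiece F n)) n).trans
        Set.subset_union_left) ih

theorem eventually_associatedPrimes_quotient_succ_subset :
    ∀ᶠ n in atTop, associatedPrimes R (M ⧸ F.N (n + 1)) ⊆ associatedPrimes R (M ⧸ F.N n) := by
  obtain ⟨k, hk⟩ := eventuallyConst_atTop_nat.1 (eventuallyConst_associatedPrimes_gradedPiece hF)
  filter_upwards [eventually_ge_atTop (k + 1)] with n hn
  obtain ⟨m, rfl⟩ : ∃ m, n = m + 1 := ⟨n - 1, by lia⟩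
  have hgraded : associatedPrimes R (GradedPiece F (m + 1)) ⊆
      associatedPrimes R (M ⧸ F.N (m + 1)) :=
    (hk m (by lia)).subset.trans (associatedPrimes_subquotient_subset _ _)
  exact (associatedPrimes_quotient_subset_union (F.mono _)).trans
    (Set.union_subset hgraded subset_rfl)

theorem eventuallyConst_associatedPrimes_quotient :
    EventuallyConst (fun n => associatedPrimes R (M ⧸ F.N n)) atTop :=
  eventuallyConst_of_eventually_succ_le (eventually_associatedPrimes_quotient_succ_subset hF) <|
    (finite_iUnion_associatedPrimes_quotient hF).finite_subsets.subset
      (Set.range_subset_iff.2 (Set.subset_iUnion _))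

end Filtration

/-- Stability of associated primes for an eventually `I`-stable descending filtration:
if `F` is descending, `I • F n ⊆ F (n+1)` for all `n`, and `F (n+1) = I • F n` for all
`n ≫ 0`, then `Ass(M/F n)` is eventually constant. -/
theorem associatedPrimes_filtration_stabilize [IsNoetherianRing R] [Module.Finite R M]
    (I : Ideal R) (F : ℕ → Submodule R M)
    (hdesc : ∀ n, F (n + 1) ≤ F n)
    (hsub : ∀ n, I • F n ≤ F (n + 1))
    (hstab : ∃ n₀ : ℕ, ∀ n ≥ n₀, F (n + 1) = I • F n) :
    ∃ n₁ : ℕ, ∀ n ≥ n₁, associatedPrimes R (M ⧸ F n) = associatedPrimes R (M ⧸ F n₁) := by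
  let G : I.Filtration M := ⟨F, hdesc, hsub⟩
  have hG : G.Stable := hstab.imp fun _ h n hn => (h n hn).symm
  obtain ⟨n₁, hn₁⟩ := Filter.eventuallyConst_atTop.1 (eventuallyConst_associatedPrimes_quotient hG)
  exact ⟨n₁, hn₁⟩
end
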